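/- arXiv:2410.18259 — 2 statements merged into one kernel-verified Lean document; each statement's English description precedes it below -/
import Mathlib

section
/- Let f be a real-valued function on the positive integers with f(1) = 0 and |f(q)| ≤ B for all primes q and some constant B. Suppose there is a constant κ such that Σ_{2 ≤ n ≤ x} f(P(n)) = κx + o(x) and Σ_{2 ≤ n ≤ x} f(P₂(n)) = κx + o(x) as x → ∞. Then the series Σ_{n ≥ 2} μ(n) ω(n) f(p(n)) / n converges and equals 0; that is, lim_{x → ∞} Σ_{2 ≤ n ≤ x} μ(n) ω(n) f(p(n))/n = 0. -/
open Finset ArithmeticFunction Filter Asymptotics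

/-- The largest prime factor of `n` (junk value `0` for `n ≤ 1`). -/
def maxPrimeFac (n : ℕ) : ℕ := n.primeFactors.sup _root_.id

/-- The second largest distinct prime factor of `n`: the largest prime factor of `n`
strictly less than `P(n)`, with the convention `P₂(n) = 1` if `n` has fewer than two
distinct prime factors. -/
def secondLargestPrimeFac (n : ℕ) : ℕ :=
  ((n.primeFactors.sort (· ≤ ·)).reverse).getD 1 1

lemma zb_step (G g g' : ℝ → ℂ) (n C : ℝ)
    (hG : ∀ u ∈ Set.Icc n (n+1), HasDerivAt G (g u) u)
    (hg : ∀ u ∈ Set.Icc n (n+1), HasDerivAt g (g' u) u)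
    (hb : ∀ u ∈ Set.Icc n (n+1), ‖g' u‖ ≤ C) :
    ‖g (n+1) - (G (n+1) - G n)‖ ≤ C := by
  have hmem : n + 1 ∈ Set.Icc n (n+1) := ⟨by linarith, le_rfl⟩
  have hmem0 : n ∈ Set.Icc n (n+1) := ⟨le_rfl, by linarith⟩
  have hC : 0 ≤ C := (norm_nonneg _).trans (hb _ hmem)
  have h1 : ∀ u ∈ Set.Icc n (n+1), ‖g (n+1) - g u‖ ≤ C := by
    intro u hu
    have := (convex_Icc n (n+1)).norm_image_sub_le_of_norm_hasDerivWithin_le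
      (fun x hx => (hg x hx).hasDerivWithinAt) hb hu hmem
    refine this.trans ?_
    have : ‖n + 1 - u‖ ≤ 1 := by
      rw [Real.norm_eq_abs, abs_le]; constructor <;> linarith [hu.1, hu.2]
    nlinarith
  have := (convex_Icc n (n+1)).norm_image_sub_le_of_norm_hasDerivWithin_le (C := C)
      (f := fun u : ℝ => (u:ℂ) * g (n+1) - G u) (f' := fun u : ℝ => 1 * g (n+1) - g u)
      (fun x hx => by
        have h := ((hasDerivAt_id x).ofReal_comp.mul_const (g (n+1))).sub (hG x hx)
        have h2 := h.hasDerivWithinAt (s := Set.Icc n (n+1))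
        simp only [Complex.ofReal_one] at h2
        exact h2) (by simpa using h1) hmem0 hmem
  have h2 : ((n+1 : ℝ):ℂ) * g (n+1) - G (n+1) - ((n:ℂ) * g (n+1) - G n) =
      g (n+1) - (G (n+1) - G n) := by push_cast; ring
  simp only [h2] at this
  simpa using this

lemma zb_h (n : ℕ) (hn : 1 ≤ n) : (1 + Real.log n) / (n:ℝ)^2 ≤
    4 * ((2 + Real.log n) / n - (2 + Real.log (n+1:ℕ)) / (n+1:ℕ)) := by
  have hn' : (1:ℝ) ≤ n := by exact_mod_cast hn
  have hlog : Real.log (n+1:ℕ) ≤ Real.log n + 1 / n := by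
    have h := Real.log_le_sub_one_of_pos (x := ((n:ℝ)+1)/n) (by positivity)
    rw [Real.log_div (by positivity) (by positivity)] at h
    have : ((n:ℝ)+1)/n - 1 = 1/n := by field_simp; ring
    push_cast; linarith
  have hl0 : 0 ≤ Real.log n := Real.log_nonneg hn'
  have : (2 + Real.log (n+1:ℕ)) / (n+1:ℕ) ≤ (2 + (Real.log n + 1/n)) / (n+1:ℕ) := by gcongr
  have e : (2 + Real.log n) / n - (2 + (Real.log n + 1/n)) / (n+1:ℕ) =
      (1 + Real.log n) / (n * (n+1)) := by push_cast; field_simp; ring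
  have : (1 + Real.log n) / (n:ℝ)^2 ≤ 4 * ((1 + Real.log n) / (n * (n+1))) := by
    rw [← mul_div_assoc, div_le_div_iff₀ (by positivity) (by positivity)]
    nlinarith [mul_nonneg (mul_nonneg hl0 (by linarith : (0:ℝ) ≤ n)) (by linarith : (0:ℝ) ≤ n-1), mul_nonneg hl0 (by linarith : (0:ℝ) ≤ n)]
  linarith

/-- tail comparison -/
lemma zb_tail (G g g' : ℝ → ℂ) (K : ℝ) (hK : 0 ≤ K)
    (hG : ∀ u ≥ 1, HasDerivAt G (g u) u)
    (hg : ∀ u ≥ 1, HasDerivAt g (g' u) u)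
    (hb : ∀ n : ℕ, 1 ≤ n → ∀ u ∈ Set.Icc (n:ℝ) (n+1), ‖g' u‖ ≤ K * ((1 + Real.log n) / (n:ℝ)^2))
    (N M : ℕ) (hN : 1 ≤ N) (hNM : N ≤ M) :
    ‖∑ n ∈ Finset.Ico N M, g (n+1)‖ ≤ ‖G M‖ + ‖G N‖ + 4 * K * ((2 + Real.log N) / N) := by
  have key : ‖∑ n ∈ Finset.Ico N M, g (n+1) - (G M - G N)‖ ≤
      4 * K * ((2 + Real.log N) / N - (2 + Real.log M) / M) := by
    induction M, hNM using Nat.le_induction with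
    | base => simp
    | succ M hM ih =>
      rw [Finset.sum_Ico_succ_top hM]
      have hM1 : 1 ≤ M := hN.trans hM
      have hM1' : (1:ℝ) ≤ M := by exact_mod_cast hM1
      have h1 := zb_step G g g' M _ (fun u hu => hG u (hM1'.trans hu.1))
        (fun u hu => hg u (hM1'.trans hu.1)) (hb M hM1)
      have h2 := zb_h M hM1
      have e : ∑ n ∈ Finset.Ico N M, g (n+1) + g (M+1) - (G ((M+1:ℕ):ℝ) - G N) =
        (∑ n ∈ Finset.Ico N M, g (n+1) - (G M - G N)) + (g (M+1) - (G (M+1) - G M)) := by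
        push_cast; ring
      rw [e]
      refine (norm_add_le _ _).trans ?_
      have h3 := mul_le_mul_of_nonneg_left h2 hK
      linarith
  have hM0 : (0:ℝ) ≤ (2 + Real.log M) / M := by
    have : 0 ≤ Real.log M := Real.log_natCast_nonneg M
    positivity
  have h1 : ‖∑ n ∈ Finset.Ico N M, g (n+1)‖ ≤
     ‖∑ n ∈ Finset.Ico N M, g (n+1) - (G M - G N)‖ + ‖G M - G N‖ := by
    simpa using norm_add_le (∑ n ∈ Finset.Ico N M, g (n+1) - (G M - G N)) (G M - G N)
  have h2 := norm_sub_le (G M) (G N)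
  have : 0 ≤ 4 * K * ((2 + Real.log M) / M) := by positivity
  linarith

lemma zb_head (g : ℝ → ℂ) (N : ℕ) (hN : 1 ≤ N)
    (hb : ∀ u ≥ 1, ‖g u‖ ≤ (1 + Real.log u) / u) :
    ‖∑ n ∈ Finset.range N, g (n+1)‖ ≤ (1 + Real.log N)^2 := by
  have hl0 : 0 ≤ Real.log N := Real.log_natCast_nonneg N
  calc ‖∑ n ∈ Finset.range N, g (n+1)‖ ≤ ∑ n ∈ Finset.range N, ‖g (n+1)‖ := norm_sum_le _ _
    _ ≤ ∑ n ∈ Finset.range N, (1 + Real.log N) * ((n+1:ℕ):ℝ)⁻¹ := by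
        apply Finset.sum_le_sum
        intro n hn
        refine (hb (n+1) (by linarith [Nat.cast_nonneg (α := ℝ) n])).trans ?_
        rw [div_eq_mul_inv]; push_cast
        have : (n:ℝ) + 1 ≤ N := by exact_mod_cast Finset.mem_range.mp hn
        gcongr
    _ = (1 + Real.log N) * (harmonic N : ℝ) := by
        rw [← Finset.mul_sum, harmonic]; push_cast; rfl
    _ ≤ (1 + Real.log N) * (1 + Real.log N) := by
        gcongr; exact harmonic_le_one_add_log N
    _ = _ := by ring

/-- combined bound -/
lemma zb_comb (G g g' : ℝ → ℂ) (Z : ℂ) (t : ℝ) (ht : 1 ≤ |t|)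
    (hG : ∀ u ≥ 1, HasDerivAt G (g u) u)
    (hg : ∀ u ≥ 1, HasDerivAt g (g' u) u)
    (hb' : ∀ n : ℕ, 1 ≤ n → ∀ u ∈ Set.Icc (n:ℝ) (n+1),
      ‖g' u‖ ≤ (8 * |t|) * ((1 + Real.log n) / (n:ℝ)^2))
    (hb : ∀ u ≥ 1, ‖g u‖ ≤ (1 + Real.log u) / u)
    (hGb : ∀ u ≥ 1, ‖G u‖ ≤ 1 + Real.log u)
    (hlim : Tendsto (fun M : ℕ => G M) atTop (nhds 0))
    (hZ : Tendsto (fun M : ℕ => ∑ n ∈ Finset.range M, g (n+1)) atTop (nhds Z)) :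
    ‖Z‖ ≤ 70 * (1 + Real.log (2 * |t|))^2 := by
  obtain ⟨N, hN, hN1, hN2⟩ : ∃ N : ℕ, 1 ≤ N ∧ |t| ≤ N ∧ (N:ℝ) ≤ 2 * |t| := by
    refine ⟨⌈|t|⌉₊, Nat.one_le_ceil_iff.mpr (by linarith), Nat.le_ceil _, ?_⟩
    have := Nat.ceil_lt_add_one (abs_nonneg t); linarith
  have hN' : (1:ℝ) ≤ N := by exact_mod_cast hN
  have hl0 : 0 ≤ Real.log N := Real.log_natCast_nonneg N
  have h2 : ‖Z‖ ≤ 70 * (1 + Real.log N)^2 := by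
    have hl : Tendsto (fun M : ℕ => ‖∑ n ∈ Finset.range M, g (n+1)‖ - ‖G M‖) atTop (nhds (‖Z‖ - ‖(0:ℂ)‖)) :=
      hZ.norm.sub hlim.norm
    rw [norm_zero, sub_zero] at hl
    refine le_of_tendsto hl ?_
    filter_upwards [eventually_ge_atTop N] with M hM
    rw [Finset.range_eq_Ico, ← Finset.sum_Ico_consecutive _ (Nat.zero_le N) hM]
    have h3 := zb_tail G g g' (8*|t|) (by positivity) hG hg hb' N M hN hM
    have h4 := zb_head g N hN hb
    have h5 := hGb N hN'
    rw [Finset.range_eq_Ico] at h4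
    have h6 := norm_add_le (∑ n ∈ Finset.Ico 0 N, g (n+1)) (∑ n ∈ Finset.Ico N M, g (n+1))
    have h7 : 4 * (8 * |t|) * ((2 + Real.log N) / N) ≤ 32 * (2 + Real.log N) := by
      rw [← mul_div_assoc, div_le_iff₀ (by linarith)]
      nlinarith
    nlinarith
  refine h2.trans ?_
  have : Real.log N ≤ Real.log (2*|t|) := Real.log_le_log (by linarith) hN2
  gcongr

lemma zb_cpow_norm (u : ℝ) (hu : 1 ≤ u) (s : ℂ) : ‖(u:ℂ)^s‖ = u ^ s.re :=
  Complex.norm_cpow_eq_rpow_re_of_pos (by linarith) s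

lemma zb_gder (s : ℂ) (u : ℝ) (hu : 1 ≤ u) :
    HasDerivAt (fun u : ℝ => (u:ℂ)^(-s)) (-s * (u:ℂ)^(-s-1)) u := by
  have h := (hasDerivAt_id (u:ℂ)).comp_ofReal
  have hs : (u:ℂ) ∈ Complex.slitPlane := Or.inl (by simp; linarith)
  simpa using (((hasDerivAt_id (u:ℂ)).cpow_const (c := -s) hs)).comp_ofReal

lemma zb_logder (u : ℝ) (hu : 1 ≤ u) :
    HasDerivAt (fun u : ℝ => ((Real.log u : ℝ):ℂ)) ((u:ℂ)⁻¹) u := by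
  have := (Real.hasDerivAt_log (x := u) (by linarith)).ofReal_comp
  simpa using this

lemma zb_im (s : ℂ) : |s.im| ≤ ‖-s+1‖ := by
  simpa using Complex.abs_im_le_norm (-s+1)

lemma zb_norm_le (s : ℂ) (hs : 1 < s.re) (hs2 : s.re ≤ 2) (ht : 1 ≤ |s.im|) : ‖s‖ ≤ 3 * |s.im| := by
  have := Complex.norm_le_abs_re_add_abs_im s
  rw [abs_of_pos (by linarith : (0:ℝ) < s.re)] at this
  linarith

lemma zb_lim0 (a : ℝ) (ha : a < 0) : Tendsto (fun M : ℕ => (M:ℝ)^a * (1 + Real.log M)) atTop (nhds 0) := by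
  have h1 : Tendsto (fun x : ℝ => x^a) atTop (nhds 0) := by
    simpa using tendsto_rpow_neg_atTop (y := -a) (by linarith)
  have h2 : Tendsto (fun x : ℝ => Real.log x / x^(-a)) atTop (nhds 0) :=
    (isLittleO_log_rpow_atTop (by linarith : 0 < -a)).tendsto_div_nhds_zero
  have h3 : Tendsto (fun x : ℝ => x^a * (1 + Real.log x)) atTop (nhds 0) := by
    have := h1.add h2
    rw [add_zero] at this
    refine this.congr' ?_
    filter_upwards [eventually_gt_atTop 0] with x hx
    rw [Real.rpow_neg hx.le, div_inv_eq_mul]; ring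
  exact h3.comp tendsto_natCast_atTop_atTop

lemma zb_zeta (s : ℂ) (hs : 1 < s.re) (hs2 : s.re ≤ 2) (ht : 1 ≤ |s.im|) :
    ‖riemannZeta s‖ ≤ 70 * (1 + Real.log (2 * |s.im|))^2 := by
  have hd : 1 ≤ ‖-s+1‖ := ht.trans (zb_im s)
  have hne : -s + 1 ≠ 0 := by intro h; rw [h, norm_zero] at hd; linarith
  have hGn : ∀ u : ℝ, 1 ≤ u → ‖(u:ℂ)^(-s+1)/(-s+1)‖ ≤ u ^ (1 - s.re) := by
    intro u hu
    rw [norm_div, zb_cpow_norm u hu]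
    have : (-s+1).re = 1 - s.re := by simp; ring
    rw [this]
    exact div_le_self (by positivity) hd
  refine zb_comb (fun u => (u:ℂ)^(-s+1)/(-s+1)) (fun u => (u:ℂ)^(-s))
    (fun u => -s * (u:ℂ)^(-s-1)) _ s.im ht ?_ (fun u hu => zb_gder s u hu) ?_ ?_ ?_ ?_ ?_
  · intro u hu
    exact hasDerivAt_ofReal_cpow_const' (by linarith) (by intro h; exact hne (by rw [h]; ring))
  · intro n hn u hu
    have hn' : (1:ℝ) ≤ n := by exact_mod_cast hn
    have hu1 : 1 ≤ u := hn'.trans hu.1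
    rw [norm_mul, norm_neg, zb_cpow_norm u hu1]
    have h1 : u ^ (-s-1).re ≤ ((n:ℝ)^2)⁻¹ := by
      calc u ^ (-s-1).re ≤ u ^ (-2:ℝ) := Real.rpow_le_rpow_of_exponent_le hu1 (by simp; linarith)
        _ ≤ (n:ℝ)^(-2:ℝ) := Real.rpow_le_rpow_of_nonpos (by linarith) hu.1 (by norm_num)
        _ = _ := by rw [Real.rpow_neg (by linarith)]; norm_num
    have h2 := zb_norm_le s hs hs2 ht
    have hl0 : 0 ≤ Real.log n := Real.log_natCast_nonneg n
    calc ‖s‖ * u ^ (-s-1).re ≤ (8 * |s.im|) * ((n:ℝ)^2)⁻¹ := by gcongr; linarith [abs_nonneg s.im]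
      _ ≤ _ := by
        rw [div_eq_mul_inv]; gcongr
        have : 0 ≤ ((n:ℝ)^2)⁻¹ := by positivity
        nlinarith
  · intro u hu
    rw [zb_cpow_norm u hu]
    have hl0 : 0 ≤ Real.log u := Real.log_nonneg hu
    calc u ^ (-s).re ≤ u ^ (-1:ℝ) := Real.rpow_le_rpow_of_exponent_le hu (by simp; linarith)
      _ = 1 / u := by rw [Real.rpow_neg_one, one_div]
      _ ≤ _ := by gcongr; linarith
  · intro u hu
    have hl0 : 0 ≤ Real.log u := Real.log_nonneg hu
    have : u ^ (1 - s.re) ≤ 1 := Real.rpow_le_one_of_one_le_of_nonpos hu (by linarith)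
    linarith [hGn u hu]
  · refine squeeze_zero_norm' ?_ (zb_lim0 (1 - s.re) (by linarith))
    filter_upwards [eventually_ge_atTop 1] with M hM
    have hM' : (1:ℝ) ≤ M := by exact_mod_cast hM
    have hl0 : 0 ≤ Real.log M := Real.log_nonneg hM'
    refine (hGn M hM').trans ?_
    have : 0 ≤ (M:ℝ) ^ (1 - s.re) := by positivity
    nlinarith
  · rw [zeta_eq_tsum_one_div_nat_add_one_cpow hs]
    have hsum : Summable (fun n : ℕ => 1 / ((n:ℂ)+1)^s) := by
      have := (Complex.summable_one_div_nat_cpow (p := s)).mpr hs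
      simpa using (summable_nat_add_iff 1).mpr this
    refine hsum.hasSum.tendsto_sum_nat.congr ?_
    intro M
    refine Finset.sum_congr rfl fun n _ => ?_
    rw [Complex.cpow_neg, one_div]; push_cast; rfl

lemma zb_deriv (s : ℂ) (hs : 1 < s.re) (hs2 : s.re ≤ 2) (ht : 1 ≤ |s.im|) :
    ‖deriv riemannZeta s‖ ≤ 70 * (1 + Real.log (2 * |s.im|))^2 := by
  have hd : 1 ≤ ‖-s+1‖ := ht.trans (zb_im s)
  have hne : -s + 1 ≠ 0 := by intro h; rw [h, norm_zero] at hd; linarith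
  have hGn : ∀ u : ℝ, 1 ≤ u → ‖(u:ℂ)^(-s+1)/(-s+1) * ((Real.log u : ℝ) - 1/(-s+1))‖ ≤
      u ^ (1 - s.re) * (1 + Real.log u) := by
    intro u hu
    have hl0 : 0 ≤ Real.log u := Real.log_nonneg hu
    rw [norm_mul, norm_div, zb_cpow_norm u hu]
    have : (-s+1).re = 1 - s.re := by simp; ring
    rw [this]
    gcongr
    · exact div_le_self (by positivity) hd
    · refine (norm_sub_le _ _).trans ?_
      rw [Complex.norm_real, norm_div, norm_one, Real.norm_of_nonneg hl0]
      have : 1 / ‖-s+1‖ ≤ 1 := by rw [div_le_one (by linarith)]; exact hd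
      linarith
  rw [← norm_neg]
  refine zb_comb (fun u => (u:ℂ)^(-s+1)/(-s+1) * ((Real.log u : ℝ) - 1/(-s+1)))
    (fun u => (Real.log u : ℝ) * (u:ℂ)^(-s))
    (fun u => (u:ℂ)⁻¹ * (u:ℂ)^(-s) + (Real.log u : ℝ) * (-s * (u:ℂ)^(-s-1))) _ s.im ht ?_
      (fun u hu => (zb_logder u hu).mul (zb_gder s u hu)) ?_ ?_ ?_ ?_ ?_
  · intro u hu
    have hu0 : (u:ℂ) ≠ 0 := by norm_cast; linarith
    have h1 := hasDerivAt_ofReal_cpow_const' (x := u) (r := -s) (by linarith) (by intro h; exact hne (by rw [h]; ring))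
    have h2 := h1.mul ((zb_logder u hu).sub_const (1/(-s+1)))
    refine HasDerivAt.congr_deriv h2 ?_
    rw [Complex.cpow_add _ _ hu0, Complex.cpow_one]
    field_simp
    ring
  · intro n hn u hu
    have hn' : (1:ℝ) ≤ n := by exact_mod_cast hn
    have hu1 : 1 ≤ u := hn'.trans hu.1
    have hu0 : (u:ℂ) ≠ 0 := by norm_cast; linarith
    have e : (u:ℂ)⁻¹ * (u:ℂ)^(-s) + (Real.log u : ℝ) * (-s * (u:ℂ)^(-s-1)) =
      (1 - (Real.log u : ℝ) * s) * (u:ℂ)^(-s-1) := by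
      rw [Complex.cpow_sub _ _ hu0, Complex.cpow_one]; field_simp; ring
    rw [e, norm_mul, zb_cpow_norm u hu1]
    have h1 : u ^ (-s-1).re ≤ ((n:ℝ)^2)⁻¹ := by
      calc u ^ (-s-1).re ≤ u ^ (-2:ℝ) := Real.rpow_le_rpow_of_exponent_le hu1 (by simp; linarith)
        _ ≤ (n:ℝ)^(-2:ℝ) := Real.rpow_le_rpow_of_nonpos (by linarith) hu.1 (by norm_num)
        _ = _ := by rw [Real.rpow_neg (by linarith)]; norm_num
    have h2 := zb_norm_le s hs hs2 ht
    have hl0 : 0 ≤ Real.log n := Real.log_natCast_nonneg n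
    have hlu : Real.log u ≤ 1 + Real.log n := by
      have : Real.log u ≤ Real.log (2 * n) := Real.log_le_log (by linarith) (by linarith [hu.2])
      rw [Real.log_mul (by norm_num) (by linarith)] at this
      linarith [Real.log_two_lt_d9]
    have hlu0 : 0 ≤ Real.log u := Real.log_nonneg hu1
    have h3 : ‖1 - (Real.log u : ℝ) * s‖ ≤ 8 * |s.im| * (1 + Real.log n) := by
      refine (norm_sub_le _ _).trans ?_
      rw [norm_one, norm_mul, Complex.norm_real, Real.norm_of_nonneg hlu0]
      have : Real.log u * ‖s‖ ≤ (1 + Real.log n) * (3 * |s.im|) := by gcongr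
      nlinarith
    calc _ ≤ (8 * |s.im| * (1 + Real.log n)) * ((n:ℝ)^2)⁻¹ := by gcongr
      _ = _ := by rw [div_eq_mul_inv]; ring
  · intro u hu
    have hl0 : 0 ≤ Real.log u := Real.log_nonneg hu
    rw [norm_mul, zb_cpow_norm u hu, Complex.norm_real, Real.norm_of_nonneg hl0]
    calc Real.log u * u ^ (-s).re ≤ (1 + Real.log u) * u ^ (-1:ℝ) := by
          gcongr
          · linarith
          · simp; linarith
      _ = _ := by rw [Real.rpow_neg_one, div_eq_mul_inv]
  · intro u hu
    have hl0 : 0 ≤ Real.log u := Real.log_nonneg hu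
    have : u ^ (1 - s.re) ≤ 1 := Real.rpow_le_one_of_one_le_of_nonpos hu (by linarith)
    have := hGn u hu
    nlinarith
  · refine squeeze_zero_norm' ?_ (zb_lim0 (1 - s.re) (by linarith))
    filter_upwards [eventually_ge_atTop 1] with M hM
    have hM' : (1:ℝ) ≤ M := by exact_mod_cast hM
    exact hGn M hM'
  · have hae : LSeries.abscissaOfAbsConv 1 < s.re := by
      rw [LSeries.abscissaOfAbsConv_one]; exact_mod_cast hs
    have hev : riemannZeta =ᶠ[nhds s] LSeries 1 := by
      have : {z : ℂ | 1 < z.re} ∈ nhds s := (isOpen_lt continuous_const Complex.continuous_re).mem_nhds hs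
      filter_upwards [this] with z hz
      exact (LSeries_one_eq_riemannZeta hz).symm
    rw [hev.deriv_eq, LSeries_deriv hae, neg_neg]
    have hsum : LSeriesSummable (LSeries.logMul 1) s := LSeriesSummable_logMul_of_lt_re hae
    have hsum' := (hasSum_nat_add_iff' 1).mpr hsum.hasSum
    have := hsum'.tendsto_sum_nat
    simp only [Finset.range_one, Finset.sum_singleton, LSeries.term_zero, sub_zero] at this
    refine this.congr ?_
    intro M
    refine Finset.sum_congr rfl fun n _ => ?_
    rw [LSeries.term_of_ne_zero (by omega), LSeries.logMul, Complex.cpow_neg, div_eq_mul_inv,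
      Complex.natCast_log.symm]
    push_cast
    simp

lemma zc_real_sum (σ : ℝ) (hσ : 1 < σ) : ∑' n : ℕ, 1 / ((n:ℝ) + 1) ^ σ ≤ 1 + 1 / (σ - 1) := by
  have h := ZetaAsymptotics.zeta_limit_aux1 hσ
  have h2 : 0 ≤ ZetaAsymptotics.termTSum σ := tsum_nonneg fun n => ZetaAsymptotics.term_nonneg _ _
  nlinarith

lemma zc_real_eq (σ : ℝ) (hσ : 1 < σ) : riemannZeta σ = ((∑' n : ℕ, 1 / ((n:ℝ) + 1) ^ σ : ℝ) : ℂ) := by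
  rw [zeta_eq_tsum_one_div_nat_add_one_cpow (by simpa using hσ), Complex.ofReal_tsum]
  congr 1; ext n
  push_cast
  rw [Complex.ofReal_cpow (by positivity)]
  push_cast; rfl

lemma zc_real_norm (σ : ℝ) (hσ : 1 < σ) : ‖riemannZeta σ‖ ≤ 1 + 1 / (σ - 1) := by
  rw [zc_real_eq σ hσ, Complex.norm_real, Real.norm_of_nonneg]
  · exact zc_real_sum σ hσ
  · exact tsum_nonneg fun n => by positivity

lemma zc_pow : ∀ t : ℝ, 1 ≤ t → 70 * (1 + Real.log (2 * (2 * t)))^2 ≤ 112000 * t ^ (1/18 : ℝ) := by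
  intro t ht
  have h1 := Real.log_le_rpow_div (x := t) (by linarith) (ε := 1/36) (by norm_num)
  have h2 : Real.log (2 * (2 * t)) = 2 * Real.log 2 + Real.log t := by
    rw [Real.log_mul (by norm_num) (by linarith), Real.log_mul (by norm_num) (by linarith)]; ring
  have h3 : 1 ≤ t ^ (1/36 : ℝ) := Real.one_le_rpow ht (by norm_num)
  have h4 : t ^ (1/18 : ℝ) = (t ^ (1/36 : ℝ))^2 := by
    rw [← Real.rpow_natCast, ← Real.rpow_mul (by linarith)]; norm_num
  have h0 : 0 ≤ Real.log t := Real.log_nonneg ht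
  have h5 : 1 + Real.log (2 * (2 * t)) ≤ 40 * t ^ (1/36 : ℝ) := by
    rw [h2]; have := Real.log_two_lt_d9; linarith
  have h6 : 0 ≤ 1 + Real.log (2 * (2 * t)) := by
    rw [h2]; have := Real.log_two_gt_d9; linarith
  rw [h4]
  nlinarith [pow_le_pow_left₀ h6 h5 2]

lemma zc_logmono (a b : ℝ) (ha : 1 ≤ a) (hab : a ≤ b) :
    70 * (1 + Real.log (2 * a))^2 ≤ 70 * (1 + Real.log (2 * b))^2 := by
  have : 0 ≤ Real.log (2*a) := Real.log_nonneg (by linarith)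
  have : Real.log (2*a) ≤ Real.log (2*b) := Real.log_le_log (by linarith) (by linarith)
  gcongr

lemma zc_341 (x y : ℝ) (hx : 0 < x) : 1 ≤ ‖riemannZeta (1 + x)‖^3 *
    ‖riemannZeta (1 + x + Complex.I * y)‖^4 * ‖riemannZeta (1 + x + 2 * Complex.I * y)‖ := by
  have h := DirichletCharacter.norm_LFunction_product_ge_one (N := 1) 1 hx y
  simpa [DirichletCharacter.LFunctionTrivChar, norm_mul, norm_pow] using h

lemma zc_mvt (σ₁ σ₂ t A : ℝ) (h1 : 1 < σ₁) (h12 : σ₁ ≤ σ₂) 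
    (hA : ∀ σ ∈ Set.Icc σ₁ σ₂, ‖deriv riemannZeta (σ + Complex.I * t)‖ ≤ A) :
    ‖riemannZeta (σ₂ + Complex.I * t) - riemannZeta (σ₁ + Complex.I * t)‖ ≤ A * (σ₂ - σ₁) := by
  have := (convex_Icc σ₁ σ₂).norm_image_sub_le_of_norm_hasDerivWithin_le (C := A)
      (f := fun σ : ℝ => riemannZeta (σ + Complex.I * t)) (f' := fun σ : ℝ => deriv riemannZeta (σ + Complex.I * t))
      (x := σ₁) (y := σ₂)
      (fun x hx => by
        have hd : HasDerivAt riemannZeta (deriv riemannZeta (x + Complex.I * t)) (x + Complex.I * t) := by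
          apply DifferentiableAt.hasDerivAt
          apply differentiableAt_riemannZeta
          intro h
          have := congrArg Complex.re h
          simp at this
          linarith [hx.1]
        have h := (hd.comp_add_const (x:ℂ) (Complex.I * t)).comp_ofReal
        exact h.hasDerivWithinAt) hA ⟨le_rfl, h12⟩ ⟨h12, le_rfl⟩
  rwa [Real.norm_of_nonneg (by linarith)] at this

lemma zc_lower (A t : ℝ) (hA : 1 ≤ A) (ht : 1 ≤ |t|)
    (h1 : ∀ σ : ℝ, 1 < σ → σ ≤ 2 → ‖deriv riemannZeta (σ + Complex.I * t)‖ ≤ A)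
    (h2 : ∀ σ : ℝ, 1 < σ → σ ≤ 2 → ‖riemannZeta (σ + 2 * Complex.I * t)‖ ≤ A)
    (σ : ℝ) (hσ : 1 < σ) (hσ2 : σ ≤ 2) :
    1 / (128 * A^4) ≤ ‖riemannZeta (σ + Complex.I * t)‖ := by
  have hA0 : 0 < A := by linarith
  set η : ℝ := 1 / (128 * A^5) with hη
  have hη0 : 0 < η := by positivity
  have hη1 : η ≤ 1 := by
    rw [hη, div_le_one (by positivity)]
    have : 1 ≤ A^5 := one_le_pow₀ hA
    linarith
  have main : ∀ x : ℝ, η ≤ x → x ≤ 1 → 1 / (64 * A^4) ≤ ‖riemannZeta (1 + x + Complex.I * t)‖ := by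
    intro x hx hx1
    have hx0 : 0 < x := lt_of_lt_of_le hη0 hx
    have h := zc_341 x t hx0
    have ha : ‖riemannZeta (1 + x)‖ ≤ 2 / x := by
      have := zc_real_norm (1 + x) (by linarith)
      push_cast at this
      refine this.trans ?_
      rw [add_sub_cancel_left]
      have h1 : 1 ≤ 1 / x := by rw [le_div_iff₀ hx0]; linarith
      have h2 : 2 / x = 1 / x + 1 / x := by ring
      linarith
    have hb : ‖riemannZeta (1 + x + 2 * Complex.I * t)‖ ≤ A := by
      have := h2 (1 + x) (by linarith) (by linarith)
      simpa using this
    set z := ‖riemannZeta (1 + x + Complex.I * t)‖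
    have hz : 0 ≤ z := norm_nonneg _
    have h3 : 1 ≤ (2 / η)^3 * z^4 * A := by
      refine h.trans ?_
      have : 2 / x ≤ 2 / η := by gcongr
      gcongr
      exact ha.trans this
    have h4 : 2 / η = 256 * A^5 := by rw [hη]; field_simp; norm_num
    rw [h4] at h3
    have h5 : 1 ≤ (64 * A^4 * z)^4 := by
      calc (1:ℝ) ≤ (256 * A ^ 5) ^ 3 * z ^ 4 * A := h3
        _ = _ := by ring
    have h6 : 1 ≤ 64 * A^4 * z := by
      by_contra hc
      push Not at hc
      have := pow_lt_one₀ (by positivity) hc (n := 4) (by norm_num)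
      linarith
    rw [div_le_iff₀ (by positivity)]
    linarith
  rcases le_total η (σ - 1) with h | h
  · have := main (σ - 1) h (by linarith)
    push_cast at this
    rw [add_sub_cancel] at this
    refine le_trans ?_ this
    gcongr; norm_num
  · have h3 := main η le_rfl hη1
    have h4 := zc_mvt σ (1 + η) t A hσ (by linarith) (fun u hu => h1 u (by linarith [hu.1]) (by linarith [hu.2]))
    push_cast at h4
    have h5 := norm_sub_norm_le (riemannZeta (1 + η + Complex.I * t)) (riemannZeta (σ + Complex.I * t))
    have h6 : A * (1 + η - σ) ≤ A * η := by gcongr; linarith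
    have h7 : A * η = 1 / (128 * A^4) := by rw [hη]; field_simp
    have h8 : 1 / (64 * A^4) = 2 * (1 / (128 * A^4)) := by field_simp; norm_num
    linarith

lemma zc_big : ∃ C : ℝ, 0 < C ∧ ∀ s : ℂ, 1 < s.re → s.re ≤ 2 → 1 ≤ |s.im| →
    ‖(riemannZeta s)⁻¹‖ ≤ C * (1 + s.im^2)^(1/4 : ℝ) ∧
    ‖deriv riemannZeta s / riemannZeta s ^ 2‖ ≤ C * (1 + s.im^2)^(1/4 : ℝ) := by
  refine ⟨128^2 * 112000^9, by positivity, ?_⟩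
  intro s hs hs2 ht
  set t := s.im with htdef
  set A : ℝ := 112000 * |t| ^ (1/18 : ℝ) with hAdef
  have hp : 1 ≤ |t| ^ (1/18 : ℝ) := Real.one_le_rpow ht (by norm_num)
  have hA : 1 ≤ A := by rw [hAdef]; linarith
  have h1 : ∀ σ : ℝ, 1 < σ → σ ≤ 2 → ‖deriv riemannZeta (σ + Complex.I * t)‖ ≤ A := by
    intro σ h h'
    have := zb_deriv (σ + Complex.I * t) (by simpa using h) (by simpa using h') (by simpa using ht)
    refine this.trans (le_trans ?_ (zc_pow |t| ht))
    simp only [Complex.add_im, Complex.ofReal_im, Complex.mul_im, Complex.I_re, Complex.I_im,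
      Complex.ofReal_re, zero_mul, one_mul, zero_add]
    exact zc_logmono _ _ ht (by linarith)
  have h2 : ∀ σ : ℝ, 1 < σ → σ ≤ 2 → ‖riemannZeta (σ + 2 * Complex.I * t)‖ ≤ A := by
    intro σ h h'
    have e : ((σ:ℂ) + 2 * Complex.I * t).im = 2 * t := by simp
    have e2 : |2 * t| = 2 * |t| := by rw [abs_mul]; norm_num
    have := zb_zeta (σ + 2 * Complex.I * t) (by simpa using h) (by simpa using h') (by rw [e, e2]; linarith)
    refine this.trans (le_trans ?_ (zc_pow |t| ht))
    rw [e, e2]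
  have h3 := zc_lower A t hA ht h1 h2 s.re hs hs2
  have es : (s.re : ℂ) + Complex.I * t = s := by rw [mul_comm]; exact Complex.re_add_im s
  have h4 := h1 s.re hs hs2
  rw [es] at h3 h4
  have hz0 : 0 < ‖riemannZeta s‖ := lt_of_lt_of_le (by positivity) h3
  have h5 : ‖(riemannZeta s)⁻¹‖ ≤ 128 * A^4 := by
    rw [norm_inv, inv_le_comm₀ hz0 (by positivity), ← one_div]; exact h3
  have hfin : 128^2 * A^9 ≤ 128^2 * 112000^9 * (1 + t^2)^(1/4 : ℝ) := by
    rw [hAdef, mul_pow, ← mul_assoc]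
    gcongr
    rw [← Real.rpow_natCast, ← Real.rpow_mul (abs_nonneg t)]
    calc |t| ^ (1/18 * ((9:ℕ):ℝ)) = (t^2)^(1/4:ℝ) := by
          rw [← sq_abs, ← Real.rpow_natCast, ← Real.rpow_mul (abs_nonneg t)]; norm_num
      _ ≤ _ := by gcongr; linarith
  have hA49 : A^4 ≤ A^9 := pow_le_pow_right₀ hA (by norm_num)
  constructor
  · refine h5.trans (le_trans ?_ hfin)
    have : 0 < A^9 := by positivity
    nlinarith
  · refine le_trans ?_ hfin
    rw [div_eq_mul_inv, norm_mul, ← inv_pow, norm_pow]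
    calc ‖deriv riemannZeta s‖ * ‖(riemannZeta s)⁻¹‖ ^ 2 ≤ A * (128 * A^4)^2 := by gcongr
      _ = _ := by ring

lemma zc_small : ∃ C : ℝ, 0 < C ∧ ∀ s : ℂ, 1 < s.re → s.re ≤ 2 → |s.im| ≤ 1 →
    ‖(riemannZeta s)⁻¹‖ ≤ C ∧ ‖deriv riemannZeta s / riemannZeta s ^ 2‖ ≤ C := by
  let Z : ℂ → ℂ := DirichletCharacter.LFunctionTrivChar₁ 1
  have hZd : Differentiable ℂ Z := DirichletCharacter.differentiable_LFunctionTrivChar₁ 1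
  have hZe : ∀ s : ℂ, s ≠ 1 → Z s = (s - 1) * riemannZeta s := by
    intro s hs
    simp only [Z, DirichletCharacter.LFunctionTrivChar₁]
    rw [Function.update_of_ne hs, DirichletCharacter.LFunctionTrivChar, DirichletCharacter.LFunction_modOne_eq]
  have hZne : ∀ s : ℂ, 1 ≤ s.re → Z s ≠ 0 := by
    intro s hs
    by_cases h : s = 1
    · rw [h]; exact DirichletCharacter.LFunctionTrivChar₁_apply_one_ne_zero 1
    · rw [hZe s h]; exact mul_ne_zero (sub_ne_zero_of_ne h) (riemannZeta_ne_zero_of_one_le_re hs)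
  have hZ' : Continuous (deriv Z) := hZd.contDiff.continuous_deriv le_rfl
  let K : Set ℂ := Set.Icc (1:ℝ) 2 ×ℂ Set.Icc (-1:ℝ) 1
  have hK : IsCompact K := isCompact_Icc.reProdIm isCompact_Icc
  have hK1 : ∀ s ∈ K, 1 ≤ s.re := fun s hs => hs.1.1
  obtain ⟨C1, hC1⟩ := hK.exists_bound_of_continuousOn (f := fun s => (s - 1) / Z s)
    ((continuous_id.sub continuous_const).continuousOn.div hZd.continuous.continuousOn (fun s hs => hZne s (hK1 s hs)))
  obtain ⟨C2, hC2⟩ := hK.exists_bound_of_continuousOn (f := fun s => ((s - 1) * deriv Z s - Z s) / Z s ^ 2)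
    ((((continuous_id.sub continuous_const).mul hZ').sub hZd.continuous).continuousOn.div (hZd.continuous.pow 2).continuousOn
      (fun s hs => pow_ne_zero 2 (hZne s (hK1 s hs))))
  refine ⟨max 1 (max C1 C2), by positivity, ?_⟩
  intro s hs hs2 ht
  have hsK : s ∈ K := ⟨⟨hs.le, hs2⟩, abs_le.mp ht⟩
  have hne : s ≠ 1 := by rintro rfl; simp at hs
  have hz : riemannZeta s ≠ 0 := riemannZeta_ne_zero_of_one_le_re hs.le
  have hs1 : s - 1 ≠ 0 := sub_ne_zero_of_ne hne
  have hder : deriv Z s = riemannZeta s + (s - 1) * deriv riemannZeta s := by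
    have h1 : Z =ᶠ[nhds s] fun s => (s - 1) * riemannZeta s := by
      filter_upwards [isOpen_ne.mem_nhds hne] with w hw using hZe w hw
    rw [h1.deriv_eq]
    have := ((hasDerivAt_id s).sub_const 1).mul (differentiableAt_riemannZeta hne).hasDerivAt
    have := this.deriv
    simp only [id, one_mul] at this
    exact this
  have h1 := hC1 s hsK
  have h2 := hC2 s hsK
  rw [hder, hZe s hne] at h2
  rw [hZe s hne] at h1
  constructor
  · refine le_trans (le_of_eq ?_) (h1.trans ((le_max_left _ _).trans (le_max_right _ _)))
    congr 1; field_simp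
  · refine le_trans (le_of_eq ?_) (h2.trans ((le_max_right _ _).trans (le_max_right _ _)))
    congr 1; field_simp; ring

/-- key analytic input -/
theorem zeta_inv_bounds : ∃ C : ℝ, 0 < C ∧ ∀ s : ℂ, 1 < s.re → s.re ≤ 2 →
    ‖(riemannZeta s)⁻¹‖ ≤ C * (1 + s.im^2)^(1/4 : ℝ) ∧
    ‖deriv riemannZeta s / riemannZeta s ^ 2‖ ≤ C * (1 + s.im^2)^(1/4 : ℝ) := by
  obtain ⟨C1, h1, H1⟩ := zc_big
  obtain ⟨C2, h2, H2⟩ := zc_small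
  refine ⟨C1 + C2, by positivity, ?_⟩
  intro s hs hs2
  have hone : 1 ≤ (1 + s.im^2)^(1/4 : ℝ) := Real.one_le_rpow (by nlinarith [sq_nonneg s.im]) (by norm_num)
  rcases le_total 1 |s.im| with h | h
  · obtain ⟨a, b⟩ := H1 s hs hs2 h
    constructor <;> nlinarith
  · obtain ⟨a, b⟩ := H2 s hs hs2 h
    constructor <;> nlinarith

lemma du_divisors (n : ℕ) (hn : n ≠ 0) (G : ℕ → ℝ) :
    ∑ d ∈ n.divisors, (moebius d : ℝ) * G d
      = ∑ S ∈ n.primeFactors.powerset, (-1 : ℝ)^S.card * G (∏ p ∈ S, p) := by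
  have h1 : ∑ d ∈ n.divisors, (moebius d : ℝ) * G d
      = ∑ d ∈ n.divisors with Squarefree d, (moebius d : ℝ) * G d := by
    rw [sum_filter]
    refine sum_congr rfl fun d _ => ?_
    split_ifs with h
    · rfl
    · rw [moebius_eq_zero_of_not_squarefree h]; simp
  rw [h1, Nat.sum_divisors_filter_squarefree hn]
  have h2 : (UniqueFactorizationMonoid.normalizedFactors n).toFinset = n.primeFactors := by
    rw [Nat.factors_eq]; rfl
  rw [h2]
  refine sum_congr rfl fun S hS => ?_
  have hSp : ∀ p ∈ S, p.Prime := fun p hp => Nat.prime_of_mem_primeFactors (mem_powerset.1 hS hp)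
  have h3 : S.val.prod = ∏ p ∈ S, p := Finset.prod_val S
  have h4 : (moebius (∏ p ∈ S, p)) = (-1 : ℤ)^S.card := by
    rw [isMultiplicative_moebius.map_prod_of_prime S hSp]
    rw [prod_congr rfl (fun p hp => moebius_apply_prime (hSp p hp))]
    simp
  rw [h3, h4]; push_cast; rfl

lemma du_one (T : Finset ℕ) : ∑ S ∈ T.powerset, (-1 : ℝ)^S.card = if T = ∅ then 1 else 0 := by
  have := @Finset.sum_powerset_neg_one_pow_card ℕ _ T
  exact_mod_cast this

lemma du_D (a : ℕ) (T : Finset ℕ) (ha : a ∉ T) :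
    ∑ S ∈ (insert a T).powerset, (-1 : ℝ)^S.card * (1 + S.card) = if T = ∅ then -1 else 0 := by
  rw [sum_powerset_insert ha, ← sum_add_distrib]
  have : ∀ S ∈ T.powerset, (-1 : ℝ)^S.card * (1 + S.card)
      + (-1 : ℝ)^(insert a S).card * (1 + (insert a S).card) = - (-1 : ℝ)^S.card := by
    intro S hS
    rw [card_insert_of_notMem (fun h => ha (mem_powerset.1 hS h))]
    push_cast; ring
  rw [sum_congr rfl this, sum_neg_distrib, du_one]
  split_ifs <;> simp

lemma du_omega (n : ℕ) (hn : n ≠ 0) :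
    ∑ d ∈ n.divisors, (moebius d : ℝ) * (d.primeFactors.card : ℝ)
      = if IsPrimePow n then -1 else 0 := by
  rw [du_divisors n hn (fun d => (d.primeFactors.card : ℝ))]
  have h0 : ∀ S ∈ n.primeFactors.powerset, (-1 : ℝ)^S.card * ((∏ p ∈ S, p).primeFactors.card : ℝ)
      = (-1 : ℝ)^S.card * (1 + S.card) - (-1 : ℝ)^S.card := by
    intro S hS
    rw [Nat.primeFactors_prod fun p hp => Nat.prime_of_mem_primeFactors (mem_powerset.1 hS hp)]
    ring
  rw [sum_congr rfl h0, sum_sub_distrib, du_one]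
  have h1 := isPrimePow_iff_card_primeFactors_eq_one (n := n)
  generalize n.primeFactors = T at *
  rcases T.eq_empty_or_nonempty with rfl | ⟨a, ha⟩
  · simp [h1]
  · rw [← insert_erase ha, du_D a _ (notMem_erase _ _)]
    simp only [h1]
    have : T.erase a = ∅ ↔ T.card = 1 := by
      rw [← card_eq_zero, card_erase_of_mem ha]
      have := card_pos.2 ⟨a, ha⟩
      omega
    simp [this]

lemma du_minFac (p : ℕ) (S : Finset ℕ) (hp : p.Prime) (hS : ∀ q ∈ S, q.Prime) (h : ∀ q ∈ S, p < q) :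
    (∏ q ∈ insert p S, q).minFac = p := by
  have h1 : ∀ q ∈ insert p S, q.Prime := by
    intro q hq; rcases mem_insert.1 hq with rfl | hq
    exacts [hp, hS q hq]
  have hdvd : p ∣ ∏ q ∈ insert p S, q := dvd_prod_of_mem (fun q => q) (mem_insert_self _ _)
  apply le_antisymm
  · exact Nat.minFac_le_of_dvd hp.two_le hdvd
  · have hne : (∏ q ∈ insert p S, q) ≠ 1 := fun h => by
      rw [h] at hdvd; exact hp.one_lt.ne' (Nat.dvd_one.1 hdvd)
    have h2 : (∏ q ∈ insert p S, q).minFac ∈ (∏ q ∈ insert p S, q).primeFactors := by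
      rw [Nat.mem_primeFactors]
      refine ⟨Nat.minFac_prime hne, Nat.minFac_dvd _, prod_ne_zero_iff.2 fun q hq => (h1 q hq).ne_zero⟩
    rw [Nat.primeFactors_prod h1] at h2
    rcases mem_insert.1 h2 with h2 | h2
    · exact h2.ge
    · exact (h _ h2).le

lemma du_main (f : ℕ → ℝ) (hf1 : f 1 = 0) (T : Finset ℕ) : (∀ q ∈ T, q.Prime) → T.Nonempty → 
    ∑ S ∈ T.powerset, (-1 : ℝ)^S.card * (S.card * f (∏ p ∈ S, p).minFac)
     = f (((T.sort (· ≤ ·)).reverse).getD 1 1) - f (T.sup _root_.id) := by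
  induction T using Finset.induction_on_min with
  | empty => intro _ h; exact absurd h (by simp)
  | insert a T ha ih =>
    intro hpr _
    have haT : a ∉ T := fun h => (ha a h).false
    have hTp : ∀ q ∈ T, q.Prime := fun q hq => hpr q (mem_insert_of_mem hq)
    have hap := hpr a (mem_insert_self _ _)
    rw [sum_powerset_insert haT]
    have h1 : ∀ S ∈ T.powerset, (-1 : ℝ)^(insert a S).card * ((insert a S).card * f (∏ p ∈ insert a S, p).minFac) 
        = - f a * ((-1)^S.card * (1 + S.card)) := by
      intro S hS
      have hS' := mem_powerset.1 hS
      rw [du_minFac a S hap (fun q hq => hTp q (hS' hq)) (fun q hq => ha q (hS' hq)),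
        card_insert_of_notMem (fun h => haT (hS' h))]
      push_cast; ring
    rw [sum_congr rfl h1, ← mul_sum, Finset.sort_insert _ (fun b hb => (ha b hb).le) haT, sup_insert]
    rcases T.eq_empty_or_nonempty with rfl | hT
    · simp [hf1]
    · rw [ih hTp hT]
      have hsup : _root_.id a ⊔ T.sup _root_.id = T.sup _root_.id := by
        obtain ⟨b, hb⟩ := hT
        exact sup_eq_right.2 ((ha b hb).le.trans (Finset.le_sup (f := _root_.id) hb))
      rw [hsup]
      obtain ⟨b, hb⟩ := hT
      rw [← insert_erase hb, du_D b _ (notMem_erase _ _), insert_erase hb]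
      rw [List.reverse_cons]
      split_ifs with hE
      · have hTb : T = {b} := by rw [← insert_erase hb, hE]; rfl
        subst hTb
        simp [hf1]; ring
      · have hc : 1 < (T.sort (· ≤ ·)).reverse.length := by
          rw [List.length_reverse, length_sort]
          have := card_pos.2 (nonempty_iff_ne_empty.2 hE)
          rw [card_erase_of_mem hb] at this
          omega
        rw [List.getD_append _ _ _ _ hc]
        simp

lemma duality (f : ℕ → ℝ) (hf1 : f 1 = 0) (n : ℕ) (hn : 2 ≤ n) :
    ∑ d ∈ n.divisors, (moebius d : ℝ) * (d.primeFactors.card : ℝ) * f d.minFac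
      = f (secondLargestPrimeFac n) - f (maxPrimeFac n) := by
  have := du_divisors n (by omega) (fun d => (d.primeFactors.card : ℝ) * f d.minFac)
  simp only [mul_assoc]
  rw [this]
  rw [secondLargestPrimeFac, maxPrimeFac, ← du_main f hf1 n.primeFactors 
    (fun q hq => Nat.prime_of_mem_primeFactors hq) (Nat.nonempty_primeFactors.2 (by omega))]
  refine sum_congr rfl fun S hS => ?_
  rw [Nat.primeFactors_prod fun p hp => Nat.prime_of_mem_primeFactors (mem_powerset.1 hS hp)]

/-- The Fejer-type weight `(1-u)_+` in Mellin form. -/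
noncomputable def peW : ℝ → ℂ := fun t =>
  Set.indicator (Set.Ioc 0 1) (fun _ => 1 : ℝ → ℂ) t -
    Set.indicator (Set.Ioc 0 1) (fun t => (t : ℂ) ^ (1 : ℂ) : ℝ → ℂ) t

lemma pe_hasMellin (s : ℂ) (hs : 0 < s.re) : HasMellin peW s (1 / (s * (s + 1))) := by
  have h1 := hasMellin_one_Ioc hs
  have h2 := hasMellin_cpow_Ioc 1 (s := s) (by simp; linarith)
  have h3 := hasMellin_sub h1.1 h2.1
  rw [h1.2, h2.2] at h3
  have : 1 / s - 1 / (s + 1) = 1 / (s * (s + 1)) := by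
    have a1 : s ≠ 0 := fun h => by simp [h] at hs
    have a2 : s + 1 ≠ 0 := fun h => by
      have := congrArg Complex.re h
      simp at this; linarith
    field_simp; ring
  rw [this] at h3
  exact h3

lemma pe_val (t : ℝ) (ht : 0 < t) : peW t = ((max (1 - t) 0 : ℝ) : ℂ) := by
  unfold peW
  by_cases h : t ≤ 1
  · rw [Set.indicator_of_mem (show t ∈ Set.Ioc 0 1 from ⟨ht, h⟩), Set.indicator_of_mem (show t ∈ Set.Ioc 0 1 from ⟨ht, h⟩),
      max_eq_left (by linarith)]
    simp
  · rw [Set.indicator_of_notMem (fun h' => h h'.2), Set.indicator_of_notMem (fun h' => h h'.2),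
      max_eq_right (by linarith)]
    simp

lemma pe_den (σ : ℝ) (hσ : 1 < σ) (t : ℝ) :
    1 + t^2 ≤ ‖(σ + t * Complex.I) * ((σ + t * Complex.I) + 1 : ℂ)‖ := by
  rw [norm_mul]
  have h1 : Real.sqrt (1 + t^2) ≤ ‖(σ + t * Complex.I : ℂ)‖ := by
    rw [Complex.norm_eq_sqrt_sq_add_sq]
    apply Real.sqrt_le_sqrt
    simp only [Complex.add_re, Complex.add_im, Complex.ofReal_re, Complex.ofReal_im, Complex.mul_re, Complex.mul_im,
      Complex.I_re, Complex.I_im, Complex.one_re, Complex.one_im]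
    nlinarith
  have h2 : Real.sqrt (1 + t^2) ≤ ‖(σ + t * Complex.I + 1: ℂ)‖ := by
    rw [Complex.norm_eq_sqrt_sq_add_sq]
    apply Real.sqrt_le_sqrt
    simp only [Complex.add_re, Complex.add_im, Complex.ofReal_re, Complex.ofReal_im, Complex.mul_re, Complex.mul_im,
      Complex.I_re, Complex.I_im, Complex.one_re, Complex.one_im]
    nlinarith
  calc 1 + t^2 = Real.sqrt (1 + t^2) * Real.sqrt (1 + t^2) := (Real.mul_self_sqrt (by positivity)).symm
    _ ≤ _ := by gcongr

lemma pe_meas (σ : ℝ) (hσ : 1 < σ) : Continuous (fun t : ℝ => 1 / ((σ + t * Complex.I) * ((σ + t * Complex.I) + 1 : ℂ))) := by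
  apply Continuous.div continuous_const (by fun_prop)
  intro t h
  have := pe_den σ hσ t
  rw [h] at this; simp at this; nlinarith

lemma pe_int (σ : ℝ) (hσ : 1 < σ) : MeasureTheory.Integrable (fun t : ℝ => 1 / ((σ + t * Complex.I) * ((σ + t * Complex.I) + 1 : ℂ))) := by
  refine integrable_inv_one_add_sq.mono' (pe_meas σ hσ).aestronglyMeasurable (Eventually.of_forall fun t => ?_)
  rw [norm_div, norm_one, one_div]
  gcongr
  exact pe_den σ hσ t

lemma pe_inv (σ : ℝ) (hσ : 1 < σ) (u : ℝ) (hu : 0 < u) :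
    ∫ t : ℝ, (u : ℂ) ^ (-(σ + t * Complex.I : ℂ)) * (1 / ((σ + t * Complex.I) * ((σ + t * Complex.I) + 1 : ℂ)))
      = 2 * Real.pi * ((max (1 - u) 0 : ℝ) : ℂ) := by
  have hm : ∀ t : ℝ, mellin peW (σ + t * Complex.I) = 1 / ((σ + t * Complex.I) * ((σ + t * Complex.I) + 1 : ℂ)) :=
    fun t => (pe_hasMellin _ (by simp; linarith)).2
  have h := mellinInv_mellin_eq σ peW hu (pe_hasMellin _ (by simp; linarith)).1 (by
      unfold Complex.VerticalIntegrable
      simp only [hm]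
      exact pe_int σ hσ) (by
      have : peW =ᶠ[nhds u] fun t => ((max (1 - t) 0 : ℝ) : ℂ) := by
        filter_upwards [lt_mem_nhds hu] with t ht using pe_val t ht
      refine ContinuousAt.congr ?_ this.symm
      fun_prop)
  rw [pe_val u hu, mellinInv] at h
  simp only [hm, smul_eq_mul] at h
  rw [← h, Complex.real_smul]
  push_cast
  have : (Real.pi : ℂ) ≠ 0 := by exact_mod_cast Real.pi_ne_zero
  rw [← mul_assoc, mul_one_div_cancel (by simpa using this), one_mul]

lemma pe_cpow (n : ℕ) (hn : n ≠ 0) (x : ℝ) (hx : 0 < x) (s : ℂ) : ((n / x : ℝ) : ℂ) ^ (-s) = x ^ s / (n : ℂ) ^ s := by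
  have hn' : (0 : ℝ) < n := by positivity
  rw [div_eq_mul_inv, Complex.ofReal_mul, Complex.mul_cpow_ofReal_nonneg hn'.le (by positivity),
    Complex.ofReal_inv, Complex.inv_cpow, Complex.cpow_neg, Complex.cpow_neg, Complex.ofReal_natCast]
  · rw [inv_inv]; ring
  · rw [Complex.arg_ofReal_of_nonneg hx.le]; exact Real.pi_ne_zero.symm

lemma pe_main : ∃ K : ℝ, 0 < K ∧ ∀ (a : ℕ → ℂ) (σ : ℝ), 1 < σ → LSeriesSummable a σ → ∀ x : ℝ, 0 < x → ∀ M : ℝ,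
    (∀ t : ℝ, ‖LSeries a (σ + t * Complex.I)‖ ≤ M * (1 + t^2)^(1/4 : ℝ)) →
    ‖∑ n ∈ Icc 1 ⌊x⌋₊, a n * (1 - n / x)‖ ≤ K * M * x ^ σ := by
  have h_integrable : MeasureTheory.Integrable (fun t : ℝ => (1 + t^2)^(-(3/4) : ℝ)) := by
    have := integrable_rpow_neg_one_add_norm_sq (E := ℝ) (μ := MeasureTheory.volume) (r := 3/2) (by simp; norm_num)
    simp only [Real.norm_eq_abs, sq_abs] at this
    convert this using 3
    norm_num
  have hI0 : 0 ≤ ∫ t : ℝ, (1 + t^2)^(-(3/4) : ℝ) := MeasureTheory.integral_nonneg fun t => by positivity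
  refine ⟨(∫ t : ℝ, (1 + t^2)^(-(3/4) : ℝ)) + 1, by positivity, ?_⟩
  intro a σ hσ hsum x hx M hM
  set k : ℝ → ℂ := fun t => 1 / ((σ + t * Complex.I) * ((σ + t * Complex.I) + 1 : ℂ)) with hk
  have hM0 : 0 ≤ M := by
    have := (norm_nonneg _).trans (hM 0)
    simpa using this
  set F : ℕ → ℝ → ℂ := fun n t => LSeries.term a (σ + t * Complex.I) n * ((x : ℂ) ^ (σ + t * Complex.I : ℂ) * k t) with hF
  have hxn : ∀ t : ℝ, ‖(x : ℂ) ^ (σ + t * Complex.I : ℂ)‖ = x ^ σ := by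
    intro t
    rw [Complex.norm_cpow_eq_rpow_re_of_pos hx]; simp
  have htn : ∀ n, ∀ t : ℝ, ‖LSeries.term a (σ + t * Complex.I) n‖ = ‖LSeries.term a σ n‖ := by
    intro n t
    rw [LSeries.norm_term_eq, LSeries.norm_term_eq]; simp
  have hFn : ∀ n t, ‖F n t‖ = ‖LSeries.term a σ n‖ * x ^ σ * ‖k t‖ := by
    intro n t
    rw [hF]; simp only [norm_mul, hxn, htn]; ring
  have hFc : ∀ n, Continuous (F n) := by
    intro n
    have hkc : Continuous k := pe_meas σ hσ
    refine Continuous.mul ?_ (Continuous.mul ?_ hkc)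
    · rcases eq_or_ne n 0 with rfl | hn
      · simp [LSeries.term_zero]; exact continuous_const
      · simp only [LSeries.term_of_ne_zero hn]
        refine Continuous.div continuous_const ?_ ?_
        · exact Continuous.const_cpow (by fun_prop) (Or.inl (by exact_mod_cast hn))
        · intro t; simp [Complex.cpow_eq_zero_iff, hn]
    · exact Continuous.const_cpow (by fun_prop) (Or.inl (by exact_mod_cast hx.ne'))
  have hki := pe_int σ hσ
  have hFi : ∀ n, MeasureTheory.Integrable (F n) := by
    intro n
    refine (hki.norm.const_mul (‖LSeries.term a σ n‖ * x ^ σ)).mono' (hFc n).aestronglyMeasurable (Eventually.of_forall fun t => ?_)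
    rw [hFn]
  have hsn : Summable fun n => ‖LSeries.term a σ n‖ := hsum.norm
  have hFs : Summable fun n => ∫ t, ‖F n t‖ := by
    simp only [hFn, MeasureTheory.integral_const_mul]
    exact (hsn.mul_right _).mul_right _
  have H := MeasureTheory.hasSum_integral_of_summable_integral_norm hFi hFs
  have hFint : ∀ n ∉ Icc 1 ⌊x⌋₊, ∫ t, F n t = 0 := by
    intro n hn
    rcases eq_or_ne n 0 with rfl | hn0
    · simp [hF, LSeries.term_zero]
    · have hnx : x < n := by
        simp only [mem_Icc, not_and, not_le] at hn
        exact (Nat.floor_lt hx.le).1 (hn (by omega))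
      have := pe_inv σ hσ (n / x) (by positivity)
      rw [max_eq_right (by rw [sub_nonpos, le_div_iff₀ hx]; linarith)] at this
      simp only [pe_cpow n hn0 x hx] at this
      have h2 : ∀ t, F n t = a n * ((x : ℂ) ^ (σ + t * Complex.I : ℂ) / (n : ℂ) ^ (σ + t * Complex.I : ℂ) * k t) := by
        intro t
        simp only [hF, LSeries.term_of_ne_zero hn0]; ring
      simp only [h2]
      rw [MeasureTheory.integral_const_mul, this]; simp
  have hFint2 : ∀ n ∈ Icc 1 ⌊x⌋₊, ∫ t, F n t = 2 * Real.pi * (a n * (1 - n / x)) := by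
    intro n hn
    rw [mem_Icc] at hn
    have hn0 : n ≠ 0 := by omega
    have hnx : (n : ℝ) ≤ x := (Nat.le_floor_iff hx.le).1 hn.2
    have := pe_inv σ hσ (n / x) (by positivity)
    rw [max_eq_left (by rw [sub_nonneg, div_le_one hx]; linarith)] at this
    simp only [pe_cpow n hn0 x hx] at this
    have h2 : ∀ t, F n t = a n * ((x : ℂ) ^ (σ + t * Complex.I : ℂ) / (n : ℂ) ^ (σ + t * Complex.I : ℂ) * k t) := by
      intro t
      simp only [hF, LSeries.term_of_ne_zero hn0]; ring
    simp only [h2]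
    rw [MeasureTheory.integral_const_mul, this]; push_cast; ring
  have H2 := hasSum_sum_of_ne_finset_zero (L := SummationFilter.unconditional ℕ) hFint
  have H3 := H.unique H2
  rw [sum_congr rfl hFint2, ← mul_sum] at H3
  have H4 : ‖∫ t, ∑' n, F n t‖ ≤ M * x ^ σ * ∫ t : ℝ, (1 + t^2)^(-(3/4) : ℝ) := by
    rw [← MeasureTheory.integral_const_mul]
    refine MeasureTheory.norm_integral_le_of_norm_le (h_integrable.const_mul _) (Eventually.of_forall fun t => ?_)
    have : ∑' n, F n t = LSeries a (σ + t * Complex.I) * ((x : ℂ) ^ (σ + t * Complex.I : ℂ) * k t) := by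
      rw [hF]; simp only [tsum_mul_right]; rfl
    rw [this, norm_mul, norm_mul, hxn]
    have hkt : ‖k t‖ ≤ (1 + t^2)⁻¹ := by
      rw [hk, norm_div, norm_one, one_div]
      gcongr
      exact pe_den σ hσ t
    calc _ ≤ (M * (1 + t^2)^(1/4 : ℝ)) * (x ^ σ * (1 + t^2)⁻¹) := by
            gcongr
            exact hM t
      _ = M * x^σ * ((1 + t^2)^(1/4 : ℝ) * (1 + t^2)^(-1 : ℝ)) := by rw [Real.rpow_neg_one]; ring
      _ = _ := by rw [← Real.rpow_add (by positivity)]; norm_num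
  rw [H3, norm_mul] at H4
  have h2pi : (1 : ℝ) ≤ ‖(2 * Real.pi : ℂ)‖ := by
    have : (2 * Real.pi : ℂ) = ((2 * Real.pi : ℝ) : ℂ) := by push_cast; rfl
    rw [this, Complex.norm_real, Real.norm_eq_abs, abs_of_pos (by positivity)]
    linarith [Real.pi_gt_three]
  calc _ ≤ ‖(2 * Real.pi : ℂ)‖ * ‖∑ n ∈ Icc 1 ⌊x⌋₊, a n * (1 - n / x)‖ := le_mul_of_one_le_left (norm_nonneg _) h2pi
    _ ≤ _ := H4
    _ ≤ M * x ^ σ * ((∫ t : ℝ, (1 + t^2)^(-(3/4) : ℝ)) + 1) := by gcongr; linarith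
    _ = _ := by ring

/-- log n / n on proper prime powers -/
noncomputable def ppU (n : ℕ) : ℝ := if IsPrimePow n ∧ ¬ n.Prime then Real.log n / n else 0

lemma ppU_nonneg (n : ℕ) : 0 ≤ ppU n := by
  unfold ppU; split_ifs
  · exact div_nonneg (Real.log_natCast_nonneg n) (by positivity)
  · exact le_rfl

lemma ppU_summable : Summable ppU := by
  have h1 : Summable (fun n : ℕ => Real.log n / (n : ℝ)^2) := by
    have := (Real.summable_nat_rpow_inv (p := 3/2)).2 (by norm_num)
    refine Summable.of_nonneg_of_le (fun n => ?_) (fun n => ?_) (this.mul_left 2)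
    · exact div_nonneg (Real.log_natCast_nonneg n) (by positivity)
    · rcases Nat.eq_zero_or_pos n with rfl | hn
      · simp
      have hn' : (0 : ℝ) < n := by exact_mod_cast hn
      have h := Real.log_le_rpow_div hn'.le (ε := 1/2) (by norm_num)
      calc Real.log n / (n:ℝ)^2 ≤ ((n:ℝ)^(1/2 : ℝ) / (1/2)) / (n:ℝ)^2 := by gcongr
        _ = 2 * ((n:ℝ)^(1/2 : ℝ) / (n:ℝ)^(2:ℝ)) := by rw [Real.rpow_two]; ring
        _ = 2 * ((n:ℝ)^(3/2 : ℝ))⁻¹ := by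
          rw [← Real.rpow_sub hn', ← Real.rpow_neg hn'.le]; norm_num
  have h2 : Summable (fun k : ℕ => ((k : ℝ) + 1) * (1/2)^k) := by
    have a := summable_pow_mul_geometric_of_norm_lt_one 1 (r := (1/2 : ℝ)) (by norm_num)
    have b := summable_geometric_of_lt_one (r := (1/2 : ℝ)) (by norm_num) (by norm_num)
    refine (a.add b).congr fun k => ?_
    ring
  have h1' : Summable (fun p : Nat.Primes => Real.log p / (p : ℝ)^2) := h1.comp_injective Subtype.val_injective
  have h3 := h1'.mul_of_nonneg h2 (fun p => div_nonneg (Real.log_natCast_nonneg _) (by positivity)) (fun k => by positivity)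
  have hsup : Function.support ppU ⊆ {n | IsPrimePow n} := by
    intro n hn
    by_contra h
    apply hn
    unfold ppU; rw [if_neg (fun h' => h h'.1)]
  rw [← Set.indicator_eq_self.2 hsup, ← summable_subtype_iff_indicator]
  refine (Nat.Primes.prodNatEquiv.summable_iff (f := ppU ∘ Subtype.val)).1 ?_
  refine Summable.of_nonneg_of_le (fun x => ppU_nonneg _) (fun x => ?_) (h3.mul_left 2)
  obtain ⟨p, k⟩ := x
  simp only [Function.comp, Nat.Primes.coe_prodNatEquiv_apply]
  have hp := p.2
  have hp2 : (2 : ℝ) ≤ (p : ℕ) := by exact_mod_cast hp.two_le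
  have hlog : 0 ≤ Real.log (p : ℕ) := Real.log_natCast_nonneg _
  rcases Nat.eq_zero_or_pos k with rfl | hk
  · have : ppU ((p : ℕ)^(0+1)) = 0 := by
      unfold ppU; rw [if_neg]; simp [hp]
    rw [this]; positivity
  · obtain ⟨j, rfl⟩ := Nat.exists_eq_add_of_lt hk
    unfold ppU
    split_ifs
    · push_cast
      rw [Real.log_pow]
      have : (2:ℝ)^j ≤ (p : ℕ)^j := by gcongr
      calc _ = ((0 + j + 1 + 1 : ℕ) : ℝ) * Real.log (p : ℕ) / ((p : ℕ)^2 * (p : ℕ)^j) := by ring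
        _ ≤ ((0 + j + 1 + 1 : ℕ) : ℝ) * Real.log (p : ℕ) / ((p : ℕ)^2 * 2^j) := by gcongr
        _ = _ := by
          simp only [one_div, inv_pow]; push_cast; field_simp; ring
    · positivity

lemma prime_sum_rpow (s : Finset ℕ) (hs : ∀ p ∈ s, p.Prime) (σ : ℝ) (hσ : 1 < σ) :
    ∑ p ∈ s, ((p : ℝ)^σ)⁻¹ ≤ Real.log (1 + 1/(σ - 1)) := by
  have h := log_riemannZeta_eq hσ
  have hz : (riemannZeta (σ : ℂ)).re ≤ 1 + 1/(σ - 1) := 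
    (Complex.re_le_norm _).trans (zc_real_norm σ hσ)
  have hz0 : 0 < (riemannZeta (σ : ℂ)).re := riemannZeta_re_pos_of_one_lt hσ
  have hnn : ∀ n : ℕ, 0 ≤ Λ n / ((n : ℝ) ^ σ * Real.log n) := fun n =>
    div_nonneg vonMangoldt_nonneg (mul_nonneg (by positivity) (Real.log_natCast_nonneg _))
  have hsum : Summable fun n : ℕ => Λ n / ((n : ℝ) ^ σ * Real.log n) := by
    refine Summable.of_nonneg_of_le hnn (fun n => ?_) ((Real.summable_nat_rpow_inv (p := σ)).2 hσ)
    have h1 : Λ n ≤ Real.log n := vonMangoldt_le_log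
    rcases (Real.log_natCast_nonneg n).eq_or_lt with h0 | h0
    · rw [← h0]; simp; positivity
    · have : 0 ≤ ((n : ℝ)^σ)⁻¹ := by positivity
      calc Λ n / ((n : ℝ) ^ σ * Real.log n) = ((n : ℝ)^σ)⁻¹ * (Λ n / Real.log n) := by
            rw [div_mul_eq_div_div_swap, div_eq_mul_inv, mul_comm]
        _ ≤ ((n : ℝ)^σ)⁻¹ * 1 := by
            gcongr; exact (div_le_one h0).2 h1
        _ = _ := mul_one _
  calc ∑ p ∈ s, ((p : ℝ)^σ)⁻¹ = ∑ p ∈ s, Λ p / ((p : ℝ) ^ σ * Real.log p) := by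
        refine sum_congr rfl fun p hp => ?_
        have hp := hs p hp
        have : 0 < Real.log p := Real.log_pos (by exact_mod_cast hp.one_lt)
        have hpp : (0:ℝ) < p := by exact_mod_cast hp.pos
        have : 0 < (p:ℝ)^σ := by positivity
        rw [vonMangoldt_apply_prime hp]; field_simp
    _ ≤ ∑' n : ℕ, Λ n / ((n : ℝ) ^ σ * Real.log n) := hsum.sum_le_tsum _ (fun n _ => hnn n)
    _ ≤ _ := by rw [← h]; exact Real.log_le_log hz0 hz

lemma prime_sum_inv (x : ℝ) (hx : 1 < x) (s : Finset ℕ) (hs : ∀ p ∈ s, p.Prime ∧ (p : ℝ) ≤ x) :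
    ∑ p ∈ s, (p : ℝ)⁻¹ ≤ 3 * Real.log (1 + Real.log x) := by
  have hl : 0 < Real.log x := Real.log_pos hx
  have h := prime_sum_rpow s (fun p hp => (hs p hp).1) (1 + 1 / Real.log x) (by
    have : 0 < 1 / Real.log x := by positivity
    linarith)
  rw [add_sub_cancel_left, one_div_one_div] at h
  calc ∑ p ∈ s, (p : ℝ)⁻¹ ≤ ∑ p ∈ s, 3 * ((p : ℝ)^(1 + 1 / Real.log x))⁻¹ := by
        refine sum_le_sum fun p hp => ?_
        obtain ⟨hp, hpx⟩ := hs p hp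
        have hpp : (0:ℝ) < p := by exact_mod_cast hp.pos
        rw [Real.rpow_add hpp, Real.rpow_one, mul_inv]
        have : (p:ℝ)^(1 / Real.log x) ≤ 3 := by
          calc (p:ℝ)^(1 / Real.log x) ≤ x^(1 / Real.log x) := by gcongr
            _ = Real.exp 1 := by
              rw [Real.rpow_def_of_pos (by linarith), mul_one_div_cancel hl.ne']
            _ ≤ 3 := by linarith [Real.exp_one_lt_d9]
        have h3 : (3:ℝ)⁻¹ ≤ ((p:ℝ)^(1 / Real.log x))⁻¹ := by gcongr
        have : 0 ≤ (p:ℝ)⁻¹ := by positivity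
        nlinarith
    _ = 3 * ∑ p ∈ s, ((p : ℝ)^(1 + 1 / Real.log x))⁻¹ := by rw [mul_sum]
    _ ≤ _ := by gcongr

lemma om_le_log (n : ℕ) : (n.primeFactors.card : ℝ) ≤ 2 * Real.log n := by
  rcases Nat.eq_zero_or_pos n with rfl | hn
  · simp
  have h1 : 2 ^ n.primeFactors.card ≤ n := by
    calc 2 ^ n.primeFactors.card ≤ ∏ p ∈ n.primeFactors, p :=
          Finset.pow_card_le_prod _ _ _ fun p hp => (Nat.prime_of_mem_primeFactors hp).two_le
      _ ≤ n := Nat.le_of_dvd hn (Nat.prod_primeFactors_dvd n)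
  have h2 : ((2:ℝ) ^ n.primeFactors.card) ≤ n := by exact_mod_cast h1
  have h3 := Real.log_le_log (by positivity) h2
  rw [Real.log_pow] at h3
  have := Real.log_two_gt_d9
  have h4 : (0:ℝ) ≤ n.primeFactors.card := by positivity
  nlinarith

/-- indicator of prime powers -/
noncomputable def lsPP : ℕ → ℂ := fun n => if IsPrimePow n then 1 else 0
/-- `μ ω` -/
noncomputable def lsOm : ℕ → ℂ := fun n => (moebius n : ℂ) * (n.primeFactors.card : ℂ)
/-- the proper prime power remainder -/
noncomputable def lsR : ℕ → ℂ := fun n => Complex.log n * lsPP n - (vonMangoldt n : ℂ)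
/-- trivial character -/
noncomputable def lsX (N : ℕ) : ℕ → ℂ := fun n => (1 : DirichletCharacter ℂ N) n
/-- the sequence `χ μ (1+ω)` -/
noncomputable def lsC (N : ℕ) : ℕ → ℂ := lsX N * (fun n => (moebius n : ℂ)) + lsX N * lsOm

lemma ls_absc {f : ℕ → ℂ} (h : ∀ s : ℂ, 1 < s.re → LSeriesSummable f s) (s : ℂ) (hs : 1 < s.re) :
    LSeries.abscissaOfAbsConv f < s.re := by
  have : LSeries.abscissaOfAbsConv f ≤ ((1:ℝ) : EReal) := by
    refine LSeries.abscissaOfAbsConv_le_of_forall_lt_LSeriesSummable fun y hy => h _ (by simpa using hy)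
  exact this.trans_lt (by exact_mod_cast hs)

lemma ls_sum_mu (s : ℂ) (hs : 1 < s.re) : LSeriesSummable (fun n => (moebius n : ℂ)) s :=
  ArithmeticFunction.LSeriesSummable_moebius_iff.mpr hs

lemma ls_sum_pp (s : ℂ) (hs : 1 < s.re) : LSeriesSummable lsPP s := by
  refine LSeriesSummable_of_bounded_of_one_lt_re (m := 1) (fun n _ => ?_) hs
  unfold lsPP; split_ifs <;> simp

lemma ls_sum_om (s : ℂ) (hs : 1 < s.re) : LSeriesSummable lsOm s := by
  have h1 : LSeriesSummable (LSeries.logMul 1) s :=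
    LSeriesSummable_logMul_of_lt_re (ls_absc (fun s hs => LSeriesSummable_one_iff.2 hs) s hs)
  refine .of_norm <| (h1.norm.mul_left 2).of_nonneg_of_le (fun _ ↦ norm_nonneg _) fun n ↦ ?_
  rw [LSeries.norm_term_eq, LSeries.norm_term_eq]
  split_ifs with hn
  · simp
  · rw [← mul_div_assoc]
    gcongr
    simp only [lsOm, LSeries.logMul, Pi.one_apply, mul_one, norm_mul]
    have hm : ‖(moebius n : ℂ)‖ ≤ 1 := by
      rw [Complex.norm_intCast]; exact_mod_cast abs_moebius_le_one
    have hl : ‖Complex.log (n : ℂ)‖ = Real.log n := by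
      rw [← Complex.natCast_log, Complex.norm_real, Real.norm_eq_abs, abs_of_nonneg (Real.log_natCast_nonneg n)]
    rw [hl, Complex.norm_natCast]
    calc _ ≤ 1 * (n.primeFactors.card : ℝ) := by gcongr
      _ ≤ _ := by rw [one_mul]; exact om_le_log n

lemma ls_sum_X (N : ℕ) {f : ℕ → ℂ} (s : ℂ) (h : LSeriesSummable f s) : LSeriesSummable (lsX N * f) s :=
  DirichletCharacter.LSeriesSummable_mul _ h

lemma ls_R_le (n : ℕ) (hn : n ≠ 0) : ‖lsR n‖ ≤ n * ppU n := by
  have hn' : (n : ℝ) ≠ 0 := by exact_mod_cast hn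
  unfold lsR lsPP ppU
  rw [← Complex.natCast_log]
  by_cases h : IsPrimePow n
  · by_cases hp : n.Prime
    · simp [h, hp, vonMangoldt_apply_prime hp]
    · rw [if_pos h, if_pos ⟨h, hp⟩, mul_one, ← Complex.ofReal_sub, Complex.norm_real, mul_div_cancel₀ _ hn',
        Real.norm_eq_abs, abs_of_nonneg (sub_nonneg.2 vonMangoldt_le_log)]
      linarith [vonMangoldt_nonneg (n := n)]
  · rw [if_neg h, if_neg (fun h' => h h'.1), vonMangoldt_eq_zero_iff.2 h]; simp

lemma ls_X_norm (N n : ℕ) : ‖lsX N n‖ ≤ 1 := DirichletCharacter.norm_le_one _ _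

lemma ls_R_term (N n : ℕ) (s : ℂ) (hs : 1 < s.re) : ‖LSeries.term (lsX N * lsR) s n‖ ≤ ppU n := by
  rw [LSeries.norm_term_eq]
  split_ifs with hn
  · exact ppU_nonneg n
  · have hn1 : (1 : ℝ) ≤ n := by exact_mod_cast Nat.one_le_iff_ne_zero.2 hn
    have h1 : (n : ℝ) ≤ (n:ℝ)^s.re := by
      calc (n : ℝ) = (n:ℝ)^(1:ℝ) := (Real.rpow_one _).symm
        _ ≤ _ := Real.rpow_le_rpow_of_exponent_le hn1 hs.le
    rw [div_le_iff₀ (by positivity), Pi.mul_apply, norm_mul]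
    calc _ ≤ 1 * (n * ppU n) := by
          gcongr
          · exact ls_X_norm N n
          · exact ls_R_le n hn
      _ ≤ _ := by rw [one_mul, mul_comm]; gcongr; exact ppU_nonneg n

lemma ls_sum_R (N : ℕ) (s : ℂ) (hs : 1 < s.re) : LSeriesSummable (lsX N * lsR) s :=
  .of_norm <| ppU_summable.of_nonneg_of_le (fun _ ↦ norm_nonneg _) fun n ↦ ls_R_term N n s hs

lemma ls_R_bound (N : ℕ) (s : ℂ) (hs : 1 < s.re) : ‖LSeries (lsX N * lsR) s‖ ≤ ∑' n, ppU n :=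
  tsum_of_norm_bounded ppU_summable.hasSum fun n => ls_R_term N n s hs

lemma ls_Q_bound (N : ℕ) (s : ℂ) (hs : 1 < s.re) :
    ‖LSeries (lsX N * lsPP) s‖ ≤ Real.log (1 + 1/(s.re - 1)) + 2 * ∑' n, ppU n := by
  have hsum := (ls_sum_X N s (ls_sum_pp s hs)).norm
  refine (norm_tsum_le_tsum_norm hsum).trans (hsum.tsum_le_of_sum_le fun t => ?_)
  have h1 : ∀ n ∈ t, ‖LSeries.term (lsX N * lsPP) s n‖ ≤ (if n.Prime then ((n:ℝ)^s.re)⁻¹ else 0) + 2 * ppU n := by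
    intro n _
    have hU := ppU_nonneg n
    rw [LSeries.norm_term_eq]
    split_ifs with hn hp hp
    · positivity
    · linarith
    · have : ‖(lsX N * lsPP) n‖ ≤ 1 := by
        rw [Pi.mul_apply, norm_mul]
        have h3 : ‖lsPP n‖ ≤ 1 := by unfold lsPP; split_ifs <;> simp
        exact mul_le_one₀ (ls_X_norm N n) (norm_nonneg _) h3
      have h4 : ‖(lsX N * lsPP) n‖ / (n:ℝ) ^ s.re ≤ 1 / (n:ℝ)^s.re := by gcongr
      rw [one_div] at h4
      linarith
    · by_cases h : IsPrimePow n
      · have hn1 : (1 : ℝ) ≤ n := by exact_mod_cast Nat.one_le_iff_ne_zero.2 hn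
        have hn2 : (2 : ℝ) ≤ n := by exact_mod_cast h.two_le
        have h1 : (n : ℝ) ≤ (n:ℝ)^s.re := by
          calc (n : ℝ) = (n:ℝ)^(1:ℝ) := (Real.rpow_one _).symm
            _ ≤ _ := Real.rpow_le_rpow_of_exponent_le hn1 hs.le
        have : ‖(lsX N * lsPP) n‖ ≤ 1 := by
          rw [Pi.mul_apply, norm_mul]
          have h3 : ‖lsPP n‖ ≤ 1 := by unfold lsPP; split_ifs <;> simp
          exact mul_le_one₀ (ls_X_norm N n) (norm_nonneg _) h3
        have hlog : 1 ≤ 2 * Real.log n := by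
          have := Real.log_le_log (by norm_num) hn2
          linarith [Real.log_two_gt_d9]
        unfold ppU
        rw [if_pos ⟨h, hp⟩, zero_add, ← mul_div_assoc]
        gcongr
        linarith
      · have : (lsX N * lsPP) n = 0 := by simp [lsPP, h]
        rw [this]; simp; exact hU
  refine (sum_le_sum h1).trans ?_
  rw [sum_add_distrib, ← sum_filter, ← mul_sum]
  gcongr
  · exact prime_sum_rpow _ (fun p hp => (mem_filter.1 hp).2) _ hs
  · exact ppU_summable.sum_le_tsum _ (fun n _ => ppU_nonneg n)

lemma ls_conv (N : ℕ) (s : ℂ) (hs : 1 < s.re) :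
    LSeries (lsX N * lsOm) s = - (LSeries (lsX N * fun n => (moebius n : ℂ)) s * LSeries (lsX N * lsPP) s) := by
  have h1 : LSeries.convolution 1 lsOm = fun n => - lsPP n := by
    funext n
    rcases eq_or_ne n 0 with rfl | hn
    · simp [LSeries.convolution_map_zero, lsPP, not_isPrimePow_zero]
    rw [LSeries.convolution_def]
    simp only [Pi.one_apply, one_mul]
    rw [← Nat.map_swap_divisorsAntidiagonal, sum_map]
    refine Eq.trans (Nat.sum_divisorsAntidiagonal (fun a _ => lsOm a)) ?_
    have := du_omega n hn
    unfold lsOm lsPP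
    have h2 : (((∑ d ∈ n.divisors, (moebius d : ℝ) * (d.primeFactors.card : ℝ)) : ℝ) : ℂ) = ((if IsPrimePow n then -1 else 0 : ℝ) : ℂ) := by rw [this]
    push_cast at h2
    rw [h2]; split_ifs <;> simp
  have h2 := DirichletCharacter.mul_convolution_distrib (1 : DirichletCharacter ℂ N) 1 lsOm
  rw [h1] at h2
  have h3 : LSeries (lsX N * 1) s * LSeries (lsX N * lsOm) s = - LSeries (lsX N * lsPP) s := by
    rw [← LSeries_convolution' (ls_sum_X N s (LSeriesSummable_one_iff.2 hs)) (ls_sum_X N s (ls_sum_om s hs)), ← LSeries_neg]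
    unfold lsX
    rw [h2]
    congr 1
    funext n; simp
  have h4 : LSeries (lsX N) s * LSeries (lsX N * fun n => (moebius n : ℂ)) s = 1 :=
    DirichletCharacter.LSeries.mul_mu_eq_one (1 : DirichletCharacter ℂ N) hs
  rw [mul_one] at h3
  linear_combination (LSeries (lsX N * fun n => (moebius n : ℂ)) s) * h3 - LSeries (lsX N * lsOm) s * h4

lemma ls_sum_C (N : ℕ) (s : ℂ) (hs : 1 < s.re) : LSeriesSummable (lsC N) s :=
  (ls_sum_X N s (ls_sum_mu s hs)).add (ls_sum_X N s (ls_sum_om s hs))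

lemma ls_sum_logC (N : ℕ) (s : ℂ) (hs : 1 < s.re) : LSeriesSummable (LSeries.logMul (lsC N)) s :=
  LSeriesSummable_logMul_of_lt_re (ls_absc (ls_sum_C N) s hs)

lemma ls_logC (N : ℕ) (s : ℂ) (hs : 1 < s.re) : LSeries (LSeries.logMul (lsC N)) s
    = - (deriv (fun z => (LSeries (lsX N) z)⁻¹) s * (2 - LSeries (lsX N * lsPP) s)
        + (LSeries (lsX N) s)⁻¹ * LSeries (lsX N * lsR) s) := by
  have hXs : ∀ z : ℂ, 1 < z.re → LSeriesSummable (lsX N) z := fun z hz =>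
    DirichletCharacter.LSeriesSummable_of_one_lt_re (1 : DirichletCharacter ℂ N) hz
  have hX0 : ∀ z : ℂ, 1 < z.re → LSeries (lsX N) z ≠ 0 := fun z hz =>
    DirichletCharacter.LSeries_ne_zero_of_one_lt_re (1 : DirichletCharacter ℂ N) hz
  have hmu : ∀ z : ℂ, 1 < z.re → LSeries (lsX N * fun n => (moebius n : ℂ)) z = (LSeries (lsX N) z)⁻¹ := fun z hz =>
    eq_inv_of_mul_eq_one_right (DirichletCharacter.LSeries.mul_mu_eq_one (1 : DirichletCharacter ℂ N) hz)
  have hC : ∀ z : ℂ, 1 < z.re → LSeries (lsC N) z = (LSeries (lsX N) z)⁻¹ * (1 - LSeries (lsX N * lsPP) z) := by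
    intro z hz
    unfold lsC
    rw [LSeries_add (ls_sum_X N z (ls_sum_mu z hz)) (ls_sum_X N z (ls_sum_om z hz)), ls_conv N z hz, hmu z hz]
    ring
  have hev : LSeries (lsC N) =ᶠ[nhds s] fun z => (LSeries (lsX N) z)⁻¹ * (1 - LSeries (lsX N * lsPP) z) := by
    filter_upwards [(isOpen_lt continuous_const Complex.continuous_re).mem_nhds hs] with z hz using hC z hz
  have d1 := LSeries_hasDerivAt (ls_absc (ls_sum_C N) s hs)
  have dX := LSeries_hasDerivAt (ls_absc hXs s hs)
  have dQ := LSeries_hasDerivAt (ls_absc (fun z hz => ls_sum_X N z (ls_sum_pp z hz)) s hs)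
  have dM := dX.fun_inv (hX0 s hs)
  have d2 := (dM.mul ((hasDerivAt_const s (1:ℂ)).sub dQ)).congr_of_eventuallyEq hev
  have hq := d1.unique d2
  have hvm : LSeries (lsX N * fun n => (vonMangoldt n : ℂ)) s = - deriv (LSeries (lsX N)) s / LSeries (lsX N) s :=
    DirichletCharacter.LSeries_twist_vonMangoldt_eq (1 : DirichletCharacter ℂ N) hs
  have hlog : LSeries (LSeries.logMul (lsX N * lsPP)) s
      = LSeries (lsX N * fun n => (vonMangoldt n : ℂ)) s + LSeries (lsX N * lsR) s := by
    rw [← LSeries_add (ls_sum_X N s (ArithmeticFunction.LSeriesSummable_vonMangoldt hs)) (ls_sum_R N s hs)]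
    congr 1
    funext n
    simp only [LSeries.logMul, Pi.add_apply, Pi.mul_apply, lsR]; ring
  rw [hlog, hvm, dX.deriv] at hq
  rw [dM.deriv]
  have h0 := hX0 s hs
  simp only [Pi.sub_apply] at hq
  rw [← neg_inj, hq]
  field_simp
  ring

/-- Euler factor product -/
noncomputable def euE (q : ℕ) (s : ℂ) : ℂ := ∏ p ∈ Nat.primesLE q, (1 - (p : ℂ) ^ (-s))

lemma eu_L (q : ℕ) (s : ℂ) (hs : 1 < s.re) : LSeries (lsX (primorial q)) s = euE q s * riemannZeta s := by
  have : NeZero (primorial q) := ⟨primorial_ne_zero q⟩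
  have h1 := DirichletCharacter.LFunction_eq_LSeries (1 : DirichletCharacter ℂ (primorial q)) hs
  have h2 := DirichletCharacter.LFunctionTrivChar_eq_mul_riemannZeta (N := primorial q) (s := s) (fun h => by simp [h] at hs)
  rw [primeFactors_primorial] at h2
  unfold lsX euE
  rw [← h1, ← h2]

lemma eu_pnorm (p : ℕ) (hp : p.Prime) (s : ℂ) (hs : 1 < s.re) : ‖(p : ℂ)^(-s)‖ ≤ (p : ℝ)⁻¹ := by
  have hp1 : (1:ℝ) ≤ p := by exact_mod_cast hp.one_lt.le
  rw [Complex.norm_natCast_cpow_of_pos hp.pos, ← Real.rpow_neg_one]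
  exact Real.rpow_le_rpow_of_exponent_le hp1 (by simp; linarith)

lemma eu_fac (p : ℕ) (hp : p.Prime) (s : ℂ) (hs : 1 < s.re) : 1 - (p:ℝ)⁻¹ ≤ ‖1 - (p : ℂ)^(-s)‖ := by
  have h1 := norm_sub_norm_le (1 : ℂ) ((p : ℂ)^(-s))
  have h2 := eu_pnorm p hp s hs
  rw [norm_one] at h1
  linarith

lemma eu_half (p : ℕ) (hp : p.Prime) : (p:ℝ)⁻¹ ≤ 1/2 := by
  rw [one_div]; gcongr; exact_mod_cast hp.two_le

lemma eu_fac_ne (p : ℕ) (hp : p.Prime) (s : ℂ) (hs : 1 < s.re) : 1 - (p : ℂ)^(-s) ≠ 0 := by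
  rw [← norm_pos_iff]
  linarith [eu_fac p hp s hs, eu_half p hp]

lemma eu_primes (q : ℕ) : ∀ p ∈ Nat.primesLE q, p.Prime ∧ (p : ℝ) ≤ q := by
  intro p hp
  exact ⟨Nat.prime_of_mem_primesLE hp, by exact_mod_cast Nat.le_of_mem_primesLE hp⟩

lemma eu_sum (q : ℕ) (hq : 2 ≤ q) : ∑ p ∈ Nat.primesLE q, (p : ℝ)⁻¹ ≤ 3 * Real.log (1 + Real.log q) :=
  prime_sum_inv q (by exact_mod_cast hq) _ (eu_primes q)

lemma eu_inv (q : ℕ) (hq : 2 ≤ q) (s : ℂ) (hs : 1 < s.re) : ‖(euE q s)⁻¹‖ ≤ (1 + Real.log q)^6 := by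
  have hW : 0 < 1 + Real.log q := by have := Real.log_natCast_nonneg q; linarith
  rw [euE, ← prod_inv_distrib, norm_prod]
  calc _ ≤ ∏ p ∈ Nat.primesLE q, Real.exp (2 * (p:ℝ)⁻¹) := by
        refine prod_le_prod (fun p _ => norm_nonneg _) fun p hp => ?_
        have hp := (eu_primes q p hp).1
        have h1 := eu_fac p hp s hs
        have h2 := eu_half p hp
        have h3 := Real.add_one_le_exp (2 * (p:ℝ)⁻¹)
        have h0 : 0 ≤ (p:ℝ)⁻¹ := by positivity
        rw [norm_inv]
        refine le_trans ?_ h3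
        rw [inv_le_iff_one_le_mul₀ (by linarith)]
        nlinarith
    _ = Real.exp (2 * ∑ p ∈ Nat.primesLE q, (p:ℝ)⁻¹) := by rw [← Real.exp_sum, mul_sum]
    _ ≤ Real.exp (6 * Real.log (1 + Real.log q)) := by
        apply Real.exp_le_exp.2; linarith [eu_sum q hq]
    _ = _ := by
        rw [show (6:ℝ) = ((6:ℕ):ℝ) by norm_num, Real.exp_nat_mul, Real.exp_log hW]

lemma eu_facder (p : ℕ) (hp : p.Prime) (s : ℂ) :
    HasDerivAt (fun z : ℂ => 1 - (p : ℂ)^(-z)) ((p : ℂ)^(-s) * Complex.log p) s := by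
  have h := ((hasDerivAt_id s).neg).const_cpow (c := (p:ℂ)) (Or.inl (by exact_mod_cast hp.ne_zero))
  have := (hasDerivAt_const s (1:ℂ)).sub h
  refine HasDerivAt.congr_deriv this ?_
  simp

lemma eu_diff (q : ℕ) (s : ℂ) : DifferentiableAt ℂ (euE q) s := by
  unfold euE
  exact DifferentiableAt.fun_finsetProd fun p hp => (eu_facder p (eu_primes q p hp).1 s).differentiableAt

lemma eu_ne (q : ℕ) (s : ℂ) (hs : 1 < s.re) : euE q s ≠ 0 :=
  prod_ne_zero_iff.2 fun p hp => eu_fac_ne p (eu_primes q p hp).1 s hs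

lemma eu_logder (q : ℕ) (hq : 2 ≤ q) (s : ℂ) (hs : 1 < s.re) : ‖deriv (euE q) s / euE q s‖ ≤ 6 * (1 + Real.log q)^2 := by
  have h := logDeriv_prod (s := Nat.primesLE q) (f := fun (p : ℕ) (z : ℂ) => 1 - (p : ℂ)^(-z)) (x := s)
    (fun p hp => eu_fac_ne p (eu_primes q p hp).1 s hs) (fun p hp => (eu_facder p (eu_primes q p hp).1 s).differentiableAt)
  have h' : deriv (euE q) s / euE q s = logDeriv (fun z => ∏ p ∈ Nat.primesLE q, (1 - (p : ℂ) ^ (-z))) s := rfl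
  have hl := Real.log_natCast_nonneg q
  rw [h', h]
  calc _ ≤ ∑ p ∈ Nat.primesLE q, 2 * Real.log q * (p:ℝ)⁻¹ := by
        refine norm_sum_le_of_le _ fun p hp => ?_
        obtain ⟨hp, hpq⟩ := eu_primes q p hp
        rw [logDeriv_apply, (eu_facder p hp s).deriv, norm_div, norm_mul]
        have h1 := eu_fac p hp s hs
        have h2 := eu_half p hp
        have h3 := eu_pnorm p hp s hs
        have hp0 : (0:ℝ) < p := by exact_mod_cast hp.pos
        have h4 : ‖Complex.log (p:ℂ)‖ ≤ Real.log q := by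
          rw [← Complex.natCast_log, Complex.norm_real, Real.norm_eq_abs, abs_of_nonneg (Real.log_natCast_nonneg p)]
          exact Real.log_le_log hp0 hpq
        rw [div_le_iff₀ (by linarith)]
        calc _ ≤ (p:ℝ)⁻¹ * Real.log q := by gcongr
          _ ≤ 2 * Real.log q * (p:ℝ)⁻¹ * (1/2) := by linarith
          _ ≤ _ := by gcongr; linarith
    _ = 2 * Real.log q * ∑ p ∈ Nat.primesLE q, (p:ℝ)⁻¹ := by rw [mul_sum]
    _ ≤ 2 * Real.log q * (3 * Real.log (1 + Real.log q)) := by gcongr; exact eu_sum q hq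
    _ ≤ 2 * (1 + Real.log q) * (3 * (1 + Real.log q)) := by
        have := Real.log_le_sub_one_of_pos (show 0 < 1 + Real.log q by linarith)
        have h3 : 0 ≤ Real.log (1 + Real.log q) := Real.log_nonneg (by linarith)
        gcongr <;> linarith
    _ = _ := by ring

theorem logC_bound : ∃ C : ℝ, 0 < C ∧ ∀ q : ℕ, 2 ≤ q → ∀ s : ℂ, 1 < s.re → s.re ≤ 2 →
    ‖LSeries (LSeries.logMul (lsC (primorial q))) s‖ ≤
      C * (1 + Real.log (1 + 1/(s.re - 1))) * (1 + Real.log q)^8 * (1 + s.im^2)^(1/4 : ℝ) := by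
  obtain ⟨C, hC, H⟩ := zeta_inv_bounds
  set J := ∑' n, ppU n
  have hJ : 0 ≤ J := tsum_nonneg ppU_nonneg
  refine ⟨C * (14 + 15 * J), by positivity, ?_⟩
  intro q hq s hs hs2
  obtain ⟨H1, H2⟩ := H s hs hs2
  set T := (1 + s.im^2)^(1/4 : ℝ)
  have hT : 0 ≤ T := by positivity
  set W := 1 + Real.log q with hWd
  have hW : 1 ≤ W := by have := Real.log_natCast_nonneg q; linarith
  set ℓ := Real.log (1 + 1/(s.re - 1))
  have hl : 0 ≤ ℓ := Real.log_nonneg (by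
    have : 0 < 1/(s.re - 1) := by
      apply div_pos one_pos; linarith
    linarith)
  have hQ := ls_Q_bound (primorial q) s hs
  have hR := ls_R_bound (primorial q) s hs
  have hne1 : s ≠ 1 := fun h => by simp [h] at hs
  have hz0 : riemannZeta s ≠ 0 := riemannZeta_ne_zero_of_one_lt_re hs
  have hE0 := eu_ne q s hs
  have hM : ‖(LSeries (lsX (primorial q)) s)⁻¹‖ ≤ W^6 * (C * T) := by
    rw [eu_L q s hs, mul_inv, norm_mul]
    gcongr
    exact eu_inv q hq s hs
  have hder : deriv (fun z => (LSeries (lsX (primorial q)) z)⁻¹) s = 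
      - ((deriv (euE q) s / euE q s) * ((euE q s)⁻¹ * (riemannZeta s)⁻¹)
        + (euE q s)⁻¹ * (deriv riemannZeta s / riemannZeta s ^ 2)) := by
    have hev : (fun z => (LSeries (lsX (primorial q)) z)⁻¹) =ᶠ[nhds s] fun z => (euE q z * riemannZeta z)⁻¹ := by
      filter_upwards [(isOpen_lt continuous_const Complex.continuous_re).mem_nhds hs] with z hz
      rw [eu_L q z hz]
    rw [hev.deriv_eq]
    have d := ((eu_diff q s).hasDerivAt.mul (differentiableAt_riemannZeta hne1).hasDerivAt).fun_inv (mul_ne_zero hE0 hz0)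
    have d' := d.deriv
    simp only [Pi.mul_apply] at d'
    rw [d']
    field_simp
  have hMd : ‖deriv (fun z => (LSeries (lsX (primorial q)) z)⁻¹) s‖ ≤ 7 * W^8 * (C * T) := by
    rw [hder, norm_neg]
    have e1 := eu_logder q hq s hs
    have e2 := eu_inv q hq s hs
    calc _ ≤ (6 * W^2) * (W^6 * (C * T)) + W^6 * (C * T) := by
          refine (norm_add_le _ _).trans ?_
          rw [norm_mul, norm_mul, norm_mul]
          gcongr
      _ ≤ (6 * W^2) * (W^6 * (C * T)) + W^8 * (C * T) := by gcongr; norm_num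
      _ = _ := by ring
  rw [ls_logC _ s hs, norm_neg]
  calc _ ≤ (7 * W^8 * (C * T)) * (2 + (ℓ + 2 * J)) + W^6 * (C * T) * J := by
        refine (norm_add_le _ _).trans ?_
        rw [norm_mul, norm_mul]
        gcongr
        refine (norm_sub_le _ _).trans ?_
        rw [Complex.norm_ofNat]
        gcongr
    _ ≤ (7 * W^8 * (C * T)) * (2 + (ℓ + 2 * J)) + W^8 * (C * T) * J := by gcongr; norm_num
    _ = (W^8 * (C * T)) * (14 + 7 * ℓ + 15 * J) := by ring
    _ ≤ (W^8 * (C * T)) * ((14 + 15 * J) * (1 + ℓ)) := by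
        gcongr
        nlinarith [mul_nonneg hJ hl]
    _ = _ := by ring

lemma pi_le5 (x : ℝ) (hx : 1 < x) : (Nat.primeCounting ⌊x⌋₊ : ℝ) ≤ 5 * x / Real.log x := by
  have h := Chebyshev.pi_le_log4_mul_div hx
  have hx0 : 0 < x := by linarith
  have hl : 0 < Real.log x := Real.log_pos hx
  have h2 := Real.log_le_rpow_div hx0.le (ε := 1/2) (by norm_num)
  rw [← Real.sqrt_eq_rpow] at h2
  rw [Real.log_sqrt hx0.le] at h
  have hs : 0 < √x := Real.sqrt_pos.2 hx0
  have h3 : √x ≤ 2 * x / Real.log x := by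
    rw [le_div_iff₀ hl]
    nlinarith [Real.mul_self_sqrt hx0.le]
  have h4 : Real.log 4 ≤ 1.4 := by
    rw [show (4:ℝ) = 2^2 by norm_num, Real.log_pow]; push_cast; linarith [Real.log_two_lt_d9]
  have h5 : Real.log 4 * x / (Real.log x / 2) ≤ 3 * x / Real.log x := by
    rw [div_div_eq_mul_div]
    apply div_le_div_of_nonneg_right _ hl.le
    nlinarith
  have h6 : 5 * x / Real.log x = 3 * x / Real.log x + 2 * x / Real.log x := by ring
  linarith

lemma multiples_card (a b p : ℕ) (hp : 0 < p) (hab : a ≤ b) :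
    (((Ioc a b).filter (p ∣ ·)).card : ℝ) ≤ ((b : ℝ) - a) * (p : ℝ)⁻¹ + 1 := by
  have h1 : ((Ioc a b).filter (p ∣ ·)).card ≤ (Ioc (a / p) (b / p)).card := by
    refine card_le_card_of_injOn (fun m => m / p) ?_ ?_
    · intro m hm
      simp only [coe_filter, mem_Ioc, Set.mem_setOf_eq] at hm
      obtain ⟨⟨h1, h2⟩, k, rfl⟩ := hm
      simp only [coe_Ioc, Set.mem_Ioc, Nat.mul_div_cancel_left k hp]
      exact ⟨Nat.div_lt_of_lt_mul h1, (Nat.le_div_iff_mul_le hp).2 (by rw [mul_comm]; exact h2)⟩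
    · intro m hm n hn h
      simp only [coe_filter, mem_Ioc, Set.mem_setOf_eq] at hm hn
      obtain ⟨_, k, rfl⟩ := hm
      obtain ⟨_, l, rfl⟩ := hn
      simp only [Nat.mul_div_cancel_left _ hp] at h
      rw [h]
  rw [Nat.card_Ioc] at h1
  have h2 : a / p ≤ b / p := Nat.div_le_div_right hab
  have h3 : ((b / p - a / p : ℕ) : ℝ) = ((b / p : ℕ) : ℝ) - ((a / p : ℕ) : ℝ) := by push_cast [h2]; ring
  have h4 : ((b / p : ℕ) : ℝ) ≤ (b : ℝ) / p := Nat.cast_div_le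
  have h5 : (a : ℝ) / p < ((a / p : ℕ) : ℝ) + 1 := by
    have hp' : (0:ℝ) < p := by exact_mod_cast hp
    rw [div_lt_iff₀ hp']
    have := Nat.lt_mul_div_succ a hp
    have h : (a:ℝ) < p * ((a / p : ℕ) + 1) := by exact_mod_cast this
    linarith
  have h6 : (((Ioc a b).filter (p ∣ ·)).card : ℝ) ≤ ((b / p - a / p : ℕ) : ℝ) := by exact_mod_cast h1
  have h7 : ((b : ℝ) - a) * (p : ℝ)⁻¹ = (b : ℝ) / p - a / p := by rw [← div_eq_mul_inv]; ring
  linarith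

lemma omega_window (a b : ℕ) (hab : a ≤ b) (hb : 2 ≤ b) :
    ∑ m ∈ Ioc a b, (m.primeFactors.card : ℝ) ≤ ((b:ℝ) - a) * (3 * Real.log (1 + Real.log b)) + 5 * b / Real.log b := by
  have h1 : ∀ m ∈ Ioc a b, (m.primeFactors.card : ℝ) = ∑ p ∈ Nat.primesLE b, if p ∣ m then (1:ℝ) else 0 := by
    intro m hm
    rw [mem_Ioc] at hm
    rw [← sum_filter, sum_const, nsmul_eq_mul, mul_one]
    congr 2
    ext p
    rw [Nat.mem_primeFactors, mem_filter, Nat.mem_primesLE]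
    constructor
    · rintro ⟨h1, h2, h3⟩
      exact ⟨⟨(Nat.le_of_dvd (by omega) h2).trans hm.2, h1⟩, h2⟩
    · rintro ⟨⟨h1, h2⟩, h3⟩
      exact ⟨h2, h3, by omega⟩
  rw [sum_congr rfl h1, sum_comm]
  have hba : (0:ℝ) ≤ (b:ℝ) - a := sub_nonneg.2 (by exact_mod_cast hab)
  calc _ ≤ ∑ p ∈ Nat.primesLE b, (((b:ℝ) - a) * (p:ℝ)⁻¹ + 1) := by
        refine sum_le_sum fun p hp => ?_
        rw [← sum_filter, sum_const, nsmul_eq_mul, mul_one]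
        exact multiples_card a b p (eu_primes b p hp).1.pos hab
    _ = ((b:ℝ) - a) * ∑ p ∈ Nat.primesLE b, (p:ℝ)⁻¹ + Nat.primeCounting b := by
        rw [sum_add_distrib, ← mul_sum, sum_const, nsmul_eq_mul, mul_one]
        congr 3
        simp
    _ ≤ _ := by
        have := pi_le5 b (by exact_mod_cast hb)
        rw [Nat.floor_natCast] at this
        gcongr
        exact eu_sum b hb

/-- `λ(x) = (log x)^(1/16)` -/
noncomputable def lam (x : ℝ) : ℝ := (Real.log x)^(1/16 : ℝ)

lemma log_ge_one (x : ℝ) (hx : 3 ≤ x) : 1 ≤ Real.log x := by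
  rw [Real.le_log_iff_exp_le (by linarith)]
  linarith [Real.exp_one_lt_d9]

lemma lam_ge_one (x : ℝ) (hx : 3 ≤ x) : 1 ≤ lam x := Real.one_le_rpow (log_ge_one x hx) (by norm_num)

lemma lam_pow (x : ℝ) (hx : 3 ≤ x) : lam x ^ 16 = Real.log x := by
  have := log_ge_one x hx
  rw [lam, ← Real.rpow_natCast, ← Real.rpow_mul (by linarith)]; norm_num

lemma ell_le (x : ℝ) (hx : 3 ≤ x) : 1 + Real.log (1 + Real.log (3 * x)) ≤ 33 * lam x := by
  have h1 := log_ge_one x hx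
  have h2 : Real.log (3 * x) ≤ 2 * Real.log x := by
    rw [Real.log_mul (by norm_num) (by linarith)]
    have := Real.log_le_log (by norm_num) hx
    linarith
  have h3 : 0 ≤ Real.log (3 * x) := Real.log_nonneg (by linarith)
  have h4 : Real.log (1 + Real.log (3 * x)) ≤ Real.log (3 * Real.log x) :=
    Real.log_le_log (by linarith) (by linarith)
  have h5 := Real.log_le_rpow_div (show 0 ≤ 3 * Real.log x by linarith) (ε := 1/16) (by norm_num)
  rw [Real.mul_rpow (by norm_num) (by linarith)] at h5
  have h6 : (3:ℝ)^(1/16:ℝ) ≤ 2 := by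
    calc (3:ℝ)^(1/16:ℝ) ≤ ((2:ℝ)^(16:ℝ))^(1/16:ℝ) := by
          apply Real.rpow_le_rpow <;> norm_num
      _ = 2 := by rw [← Real.rpow_mul (by norm_num)]; norm_num
  have h7 := lam_ge_one x hx
  rw [← lam] at h5
  have h8 : (3:ℝ)^(1/16:ℝ) * lam x ≤ 2 * lam x := by gcongr
  have : (3:ℝ)^(1/16:ℝ) * lam x / (1/16) = 16 * ((3:ℝ)^(1/16:ℝ) * lam x) := by ring
  linarith

/-- real coefficients `χ_q μ (1+ω)` -/
noncomputable def cR (q m : ℕ) : ℝ :=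
  if Nat.Coprime m (primorial q) then (moebius m : ℝ) * (1 + m.primeFactors.card) else 0

lemma cR_abs (q m : ℕ) : |cR q m| ≤ 1 + m.primeFactors.card := by
  unfold cR
  split_ifs
  · rw [abs_mul, abs_of_nonneg (show (0:ℝ) ≤ 1 + m.primeFactors.card by positivity)]
    have : |(moebius m : ℝ)| ≤ 1 := by exact_mod_cast abs_moebius_le_one
    have h : (0:ℝ) ≤ 1 + m.primeFactors.card := by positivity
    nlinarith
  · simp; positivity

lemma cR_eq (q m : ℕ) : lsC (primorial q) m = (cR q m : ℂ) := by
  unfold lsC cR lsX lsOm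
  simp only [Pi.add_apply, Pi.mul_apply]
  split_ifs with h
  · rw [MulChar.one_apply ((ZMod.isUnit_iff_coprime _ _).2 h)]; push_cast; ring
  · rw [MulChar.map_nonunit _ (fun h' => h ((ZMod.isUnit_iff_coprime _ _).1 h'))]; simp

lemma U_bound : ∃ C : ℝ, 0 < C ∧ ∀ q : ℕ, 2 ≤ q → ∀ n : ℕ, 3 ≤ n →
    |∑ m ∈ Icc 1 n, cR q m * Real.log m * ((n:ℝ) - m)| ≤ C * n^2 * (1 + Real.log (1 + Real.log n)) * (1 + Real.log q)^8 := by
  obtain ⟨C, hC, H⟩ := logC_bound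
  obtain ⟨K, hK, HK⟩ := pe_main
  refine ⟨3 * K * C, by positivity, ?_⟩
  intro q hq n hn
  have hn3 : (3:ℝ) ≤ n := by exact_mod_cast hn
  have hl := log_ge_one n hn3
  set σ : ℝ := 1 + 1 / Real.log n with hσ
  have hσ0 : 0 < 1 / Real.log n := by positivity
  have hσ1 : 1 / Real.log n ≤ 1 := by rw [div_le_one (by linarith)]; exact hl
  have h := HK (LSeries.logMul (lsC (primorial q))) σ (by linarith) (ls_sum_logC _ _ (by simp; linarith)) n (by linarith)
    (C * (1 + Real.log (1 + Real.log n)) * (1 + Real.log q)^8) (fun t => by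
      have := H q hq (σ + t * Complex.I) (by simp; linarith) (by simp; linarith)
      have e1 : (σ + t * Complex.I : ℂ).re = σ := by simp
      have e2 : (σ + t * Complex.I : ℂ).im = t := by simp
      rw [e1, e2, hσ, add_sub_cancel_left, one_div_one_div] at this
      exact this)
  rw [Nat.floor_natCast] at h
  have e : ∑ m ∈ Icc 1 n, LSeries.logMul (lsC (primorial q)) m * (1 - (m:ℂ) / ((n:ℝ):ℂ))
      = (((1 / (n:ℝ)) * ∑ m ∈ Icc 1 n, cR q m * Real.log m * ((n:ℝ) - m) : ℝ) : ℂ) := by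
    rw [mul_sum]; push_cast
    refine sum_congr rfl fun m _ => ?_
    rw [LSeries.logMul, cR_eq]
    have : (n:ℂ) ≠ 0 := by exact_mod_cast (show n ≠ 0 by omega)
    field_simp
  rw [e, Complex.norm_real, Real.norm_eq_abs, abs_mul, abs_of_pos (by positivity)] at h
  have hx : (n:ℝ)^σ ≤ 3 * n := by
    rw [hσ, Real.rpow_add (by linarith), Real.rpow_one, Real.rpow_def_of_pos (by linarith), mul_one_div_cancel (by linarith)]
    nlinarith [Real.exp_one_lt_d9]
  have hl2 : 0 ≤ Real.log (1 + Real.log n) := Real.log_nonneg (by linarith)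
  have hq0 := Real.log_natCast_nonneg q
  set D := C * (1 + Real.log (1 + Real.log n)) * (1 + Real.log q)^8 with hD
  have hD0 : 0 ≤ D := by positivity
  have h2 : 1 / (n:ℝ) * |∑ m ∈ Icc 1 n, cR q m * Real.log m * ((n:ℝ) - m)| ≤ K * D * (3 * n) := h.trans (by gcongr)
  rw [one_div_mul_eq_div, div_le_iff₀ (by linarith)] at h2
  calc _ ≤ _ := h2
    _ = _ := by rw [hD]; ring

lemma Icc_one_eq (n : ℕ) : Icc 1 n = Ioc 0 n := by ext; simp only [mem_Icc, mem_Ioc]; omega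

lemma lam_mono (x y : ℝ) (hx : 3 ≤ x) (h : x ≤ y) : lam x ≤ lam y := by
  have := log_ge_one x hx
  exact Real.rpow_le_rpow (by linarith) (Real.log_le_log (by linarith) h) (by norm_num)

lemma log3_le (x : ℝ) (hx : 3 ≤ x) : Real.log (3 * x) ≤ 2 * Real.log x := by
  rw [Real.log_mul (by norm_num) (by linarith)]
  have := Real.log_le_log (by norm_num) hx
  linarith

lemma V_bound0 : ∃ C : ℝ, 0 < C ∧ ∀ q : ℕ, 2 ≤ q → ∀ n : ℕ, 3 ≤ n →
    |∑ m ∈ Ioc 0 n, cR q m * Real.log m| ≤ C * n * lam n ^ 9 * (1 + Real.log q)^8 := by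
  obtain ⟨C, hC, H⟩ := U_bound
  refine ⟨594 * C + 415, by positivity, ?_⟩
  intro q hq n hn
  have hn3 : (3:ℝ) ≤ n := by exact_mod_cast hn
  have hl1 := log_ge_one n hn3
  have hL := lam_ge_one n hn3
  have hL16 := lam_pow n hn3
  have hell := ell_le n hn3
  set L := lam n with hLdef
  have hLn : L ^ 8 ≤ n := by
    calc L^8 ≤ L^16 := pow_le_pow_right₀ hL (by norm_num)
      _ ≤ n := by rw [hL16]; exact (Real.log_le_self (by linarith))
  have hL0 : 0 < L := by linarith
  have hq1 : (1:ℝ) ≤ n / L^8 := by rw [le_div_iff₀ (by positivity)]; linarith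
  set h := ⌈(n:ℝ) / L^8⌉₊ with hh
  have hh1 : (n:ℝ) / L^8 ≤ h := Nat.le_ceil _
  have hh2 : (h:ℝ) ≤ 2 * (n / L^8) := by
    have := Nat.ceil_lt_add_one (show 0 ≤ (n:ℝ)/L^8 by positivity)
    linarith
  have hh0 : (0:ℝ) < h := by linarith
  have hh3 : (h:ℝ) ≤ 2 * n := by
    have : (n:ℝ)/L^8 ≤ n := div_le_self (by linarith) (one_le_pow₀ hL)
    linarith
  set b := n + h with hb
  have hbc : (b:ℝ) = n + h := by rw [hb]; push_cast; ring
  have hb3 : (b:ℝ) ≤ 3 * n := by linarith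
  have hbn : (n:ℝ) ≤ b := by linarith
  have hlb1 := log_ge_one b (by linarith)
  have hlb : Real.log b ≤ Real.log (3 * n) := Real.log_le_log (by linarith) hb3
  have hlb2 : Real.log b ≤ 2 * L^16 := by rw [hL16]; linarith [log3_le n hn3]
  have hlll : Real.log (1 + Real.log b) ≤ Real.log (1 + Real.log (3*n)) := Real.log_le_log (by linarith) (by linarith)
  have hlln : Real.log (1 + Real.log n) ≤ Real.log (1 + Real.log b) :=
    Real.log_le_log (by linarith) (by linarith [Real.log_le_log (by linarith) hbn])
  have hlln0 : 0 ≤ Real.log (1 + Real.log n) := Real.log_nonneg (by linarith)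
  have hW : 1 ≤ (1 + Real.log q)^8 := one_le_pow₀ (by linarith [Real.log_natCast_nonneg q])
  set W := (1 + Real.log q)^8
  have u1 : |∑ m ∈ Icc 1 b, cR q m * Real.log m * ((b:ℝ) - m)| ≤ 297 * C * n^2 * L * W := by
    calc _ ≤ _ := H q hq b (by omega)
      _ ≤ C * (3 * n)^2 * (33 * L) * W := by gcongr <;> linarith
      _ = _ := by ring
  have u2 : |∑ m ∈ Icc 1 n, cR q m * Real.log m * ((n:ℝ) - m)| ≤ 297 * C * n^2 * L * W := by
    calc _ ≤ _ := H q hq n (by omega)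
      _ ≤ C * (3 * n)^2 * (33 * L) * W := by gcongr <;> linarith
      _ = _ := by ring
  rw [Icc_one_eq] at u1 u2
  have u3 : |∑ m ∈ Ioc n b, cR q m * Real.log m * ((b:ℝ) - m)| ≤ h * (415 * n * L^9) := by
    calc _ ≤ ∑ m ∈ Ioc n b, |cR q m * Real.log m * ((b:ℝ) - m)| := abs_sum_le_sum_abs _ _
      _ ≤ ∑ m ∈ Ioc n b, (1 + (m.primeFactors.card:ℝ)) * Real.log b * h := by
          refine sum_le_sum fun m hm => ?_
          rw [mem_Ioc] at hm
          have hm1 : (n:ℝ) < m := by exact_mod_cast hm.1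
          have hm2 : (m:ℝ) ≤ b := by exact_mod_cast hm.2
          rw [abs_mul, abs_mul, abs_of_nonneg (Real.log_natCast_nonneg m), abs_of_nonneg (sub_nonneg.2 hm2)]
          have := cR_abs q m
          have := Real.log_natCast_nonneg m
          have : Real.log m ≤ Real.log b := Real.log_le_log (by linarith) hm2
          gcongr
          linarith
      _ = h * ((h + ∑ m ∈ Ioc n b, (m.primeFactors.card:ℝ)) * Real.log b) := by
          rw [← sum_mul, ← sum_mul, sum_add_distrib, sum_const, Nat.card_Ioc, hb]; simp; ring
      _ ≤ h * (415 * n * L^9) := by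
          have hw := omega_window n b (by omega) (by omega)
          rw [show (b:ℝ) - n = h by linarith] at hw
          refine mul_le_mul_of_nonneg_left ?_ hh0.le
          calc _ ≤ (h + (h * (3 * Real.log (1 + Real.log b)) + 5 * b / Real.log b)) * Real.log b := by gcongr
            _ = h * (1 + 3 * Real.log (1 + Real.log b)) * Real.log b + 5 * b := by field_simp; ring
            _ ≤ (2 * (n / L^8)) * (100 * L) * (2 * L^16) + 5 * (3 * n) := by
                gcongr <;> linarith
            _ = 400 * n * L^9 + 15 * n := by field_simp; ring
            _ ≤ _ := by
                have : 1 ≤ L^9 := one_le_pow₀ hL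
                nlinarith
  have key : (h:ℝ) * ∑ m ∈ Ioc 0 n, cR q m * Real.log m
      = ∑ m ∈ Ioc 0 b, cR q m * Real.log m * ((b:ℝ) - m) - ∑ m ∈ Ioc 0 n, cR q m * Real.log m * ((n:ℝ) - m)
        - ∑ m ∈ Ioc n b, cR q m * Real.log m * ((b:ℝ) - m) := by
    rw [← sum_Ioc_consecutive _ (Nat.zero_le n) (show n ≤ b by omega), add_sub_right_comm, add_sub_cancel_right, ← sum_sub_distrib, mul_sum]
    refine sum_congr rfl fun m _ => ?_
    rw [hbc]; ring
  have k2 : (h:ℝ) * |∑ m ∈ Ioc 0 n, cR q m * Real.log m| ≤ 594 * C * n^2 * L * W + h * (415 * n * L^9) := by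
    rw [← abs_of_pos hh0, ← abs_mul, abs_of_pos hh0, key]
    have a1 := abs_sub (∑ m ∈ Ioc 0 b, cR q m * Real.log m * ((b:ℝ) - m) - ∑ m ∈ Ioc 0 n, cR q m * Real.log m * ((n:ℝ) - m)) (∑ m ∈ Ioc n b, cR q m * Real.log m * ((b:ℝ) - m))
    have a2 := abs_sub (∑ m ∈ Ioc 0 b, cR q m * Real.log m * ((b:ℝ) - m)) (∑ m ∈ Ioc 0 n, cR q m * Real.log m * ((n:ℝ) - m))
    linarith
  have k3 : 594 * C * n^2 * L * W ≤ h * (594 * C * n * L^9 * W) := by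
    calc 594 * C * n^2 * L * W = (n / L^8) * (594 * C * n * L^9 * W) := by field_simp
      _ ≤ _ := by gcongr
  have k4 : (h:ℝ) * (415 * n * L^9) ≤ h * (415 * n * L^9 * W) := by
    exact mul_le_mul_of_nonneg_left (le_mul_of_one_le_right (by positivity) hW) hh0.le
  have k5 : (h:ℝ) * |∑ m ∈ Ioc 0 n, cR q m * Real.log m| ≤ h * ((594 * C + 415) * n * L^9 * W) := by
    calc _ ≤ _ := k2
      _ ≤ h * (594 * C * n * L^9 * W) + h * (415 * n * L^9 * W) := add_le_add k3 k4
      _ = _ := by ring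
  exact le_of_mul_le_mul_left k5 hh0

lemma V_bound : ∃ C : ℝ, 0 < C ∧ ∀ q : ℕ, 2 ≤ q → ∀ z : ℝ, 3 ≤ z → ∀ t : ℕ, (t:ℝ) ≤ z →
    |∑ m ∈ Ioc 0 t, cR q m * Real.log m| ≤ C * z * lam z ^ 9 * (1 + Real.log q)^8 := by
  obtain ⟨C, hC, H⟩ := V_bound0
  refine ⟨C + 2, by positivity, ?_⟩
  intro q hq z hz t ht
  have hW : 1 ≤ (1 + Real.log q)^8 := one_le_pow₀ (by linarith [Real.log_natCast_nonneg q])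
  have hL : 1 ≤ lam z ^ 9 := one_le_pow₀ (lam_ge_one z hz)
  by_cases h3 : 3 ≤ t
  · have h3' : (3:ℝ) ≤ t := by exact_mod_cast h3
    have := lam_mono t z h3' ht
    have h1 := lam_ge_one t h3'
    calc _ ≤ _ := H q hq t h3
      _ ≤ (C + 2) * z * lam z ^ 9 * (1 + Real.log q)^8 := by gcongr; linarith
  · have h1 : |∑ m ∈ Ioc 0 t, cR q m * Real.log m| ≤ 2 := by
      calc _ ≤ ∑ m ∈ Ioc 0 t, |cR q m * Real.log m| := abs_sum_le_sum_abs _ _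
        _ ≤ ∑ m ∈ Ioc 0 2, |cR q m * Real.log m| := by
            apply sum_le_sum_of_subset_of_nonneg
            · apply Ioc_subset_Ioc_right; omega
            · intros; positivity
        _ ≤ 2 := by
            rw [show Ioc 0 2 = {1, 2} from rfl, sum_pair (by norm_num)]
            have := cR_abs q 2
            rw [Nat.Prime.primeFactors Nat.prime_two] at this
            simp only [card_singleton] at this
            rw [abs_mul, abs_mul]
            simp only [Nat.cast_one, Real.log_one, abs_zero, mul_zero, zero_add, Nat.cast_ofNat]
            rw [abs_of_nonneg (Real.log_nonneg one_le_two)]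
            push_cast at this
            nlinarith [Real.log_two_lt_d9, Real.log_nonneg one_le_two, abs_nonneg (cR q 2)]
    have h2 : 2 * z ≤ (C + 2) * z := by gcongr; linarith
    calc _ ≤ _ := h1
      _ ≤ (C + 2) * z := by linarith
      _ ≤ (C + 2) * z * lam z ^ 9 := le_mul_of_one_le_right (by positivity) hL
      _ ≤ _ := le_mul_of_one_le_right (by positivity) hW

lemma abel_aux (A w : ℕ → ℝ) (a : ℕ) (M : ℝ) (N : ℕ) (hN : a + 1 ≤ N)
    (hM : ∀ t, t ≤ N → |∑ m ∈ Ioc a t, A m| ≤ M)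
    (hw : ∀ m, a + 1 ≤ m → w (m+1) ≤ w m) :
    |∑ m ∈ Ioc a N, A m * w m - (∑ m ∈ Ioc a N, A m) * w N| ≤ M * (w (a+1) - w N) := by
  induction N, hN using Nat.le_induction with
  | base => simp [Nat.Ioc_succ_singleton]
  | succ N hN ih =>
    have ih := ih (fun t ht => hM t (by omega))
    rw [sum_Ioc_succ_top (by omega), sum_Ioc_succ_top (by omega)]
    have h1 := hM N (by omega)
    have h2 := hw N hN
    rw [show ∑ k ∈ Ioc a N, A k * w k + A (N + 1) * w (N + 1) - (∑ k ∈ Ioc a N, A k + A (N + 1)) * w (N + 1)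
      = (∑ k ∈ Ioc a N, A k * w k - (∑ k ∈ Ioc a N, A k) * w N) + (∑ k ∈ Ioc a N, A k) * (w N - w (N+1)) by ring]
    refine (abs_add_le _ _).trans ?_
    rw [abs_mul, abs_of_nonneg (sub_nonneg.2 h2)]
    have : |∑ k ∈ Ioc a N, A k| * (w N - w (N+1)) ≤ M * (w N - w (N+1)) :=
      mul_le_mul_of_nonneg_right h1 (sub_nonneg.2 h2)
    linarith

lemma abel_bound (A w : ℕ → ℝ) (a : ℕ) (M : ℝ) (N : ℕ) (hN : a ≤ N)
    (hM : ∀ t, t ≤ N → |∑ m ∈ Ioc 0 t, A m| ≤ M)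
    (hw : ∀ m, a + 1 ≤ m → w (m+1) ≤ w m) (hw0 : ∀ m, a + 1 ≤ m → 0 ≤ w m) :
    |∑ m ∈ Ioc a N, A m * w m| ≤ 2 * M * w (a+1) := by
  have hM0 : 0 ≤ M := (abs_nonneg _).trans (hM 0 (by omega))
  have hM' : ∀ t, t ≤ N → |∑ m ∈ Ioc a t, A m| ≤ 2 * M := by
    intro t ht
    by_cases hat : a ≤ t
    · have h := sum_Ioc_consecutive A (Nat.zero_le a) hat
      rw [← eq_sub_iff_add_eq'] at h
      rw [h]
      have := abs_sub (∑ m ∈ Ioc 0 t, A m) (∑ m ∈ Ioc 0 a, A m)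
      linarith [hM t ht, hM a hN]
    · rw [Ioc_eq_empty (by omega)]; simpa using hM0
  rcases hN.eq_or_lt with h | h
  · subst h; simp only [Ioc_self, sum_empty, abs_zero]
    have := hw0 (a+1) le_rfl
    positivity
  · have h1 := abel_aux A w a (2*M) N h hM' hw
    have h2 := hM' N le_rfl
    have h3 := hw0 N h
    have h4 : |(∑ m ∈ Ioc a N, A m) * w N| ≤ 2 * M * w N := by
      rw [abs_mul, abs_of_nonneg h3]; gcongr
    have h5 := abs_add_le (∑ m ∈ Ioc a N, A m * w m - (∑ m ∈ Ioc a N, A m) * w N) ((∑ m ∈ Ioc a N, A m) * w N)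
    rw [sub_add_cancel] at h5
    linarith

lemma omega_triv (z : ℝ) (hz : 3 ≤ z) (a : ℕ) (ha : (a:ℝ) ≤ z) :
    ∑ m ∈ Ioc 0 a, (1 + (m.primeFactors.card : ℝ)) ≤ 110 * a * lam z := by
  have hL := lam_ge_one z hz
  have hell := ell_le z hz
  by_cases h2 : 2 ≤ a
  · have h2' : (2:ℝ) ≤ a := by exact_mod_cast h2
    have hw := omega_window 0 a (by omega) h2
    have hl2 : Real.log 2 ≤ Real.log a := Real.log_le_log (by norm_num) h2'
    have hl2' := Real.log_two_gt_d9
    have h3 : Real.log a ≤ Real.log (3 * z) := Real.log_le_log (by linarith) (by linarith)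
    have h4 : Real.log (1 + Real.log a) ≤ Real.log (1 + Real.log (3 * z)) := Real.log_le_log (by linarith) (by linarith)
    have h5 : 5 * a / Real.log a ≤ 8 * a := by
      rw [div_le_iff₀ (by linarith)]; nlinarith
    rw [sum_add_distrib, sum_const, Nat.card_Ioc]
    simp only [Nat.cast_zero, sub_zero, tsub_zero, nsmul_eq_mul, mul_one] at hw ⊢
    have h6 : (a:ℝ) * (3 * Real.log (1 + Real.log a)) ≤ a * (99 * lam z) :=
      mul_le_mul_of_nonneg_left (by linarith) (by linarith)
    have h7 : (a:ℝ) ≤ a * lam z := le_mul_of_one_le_right (by linarith) hL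
    linarith
  · interval_cases a
    · simp
    · simp; linarith

lemma axer : ∃ C : ℝ, 0 < C ∧ ∀ q : ℕ, 2 ≤ q → ∀ z : ℝ, 3 ≤ z →
    |∑ m ∈ Ioc 0 ⌊z⌋₊, cR q m * (z / m - ⌊z / m⌋₊)| ≤ C * z * (1 + Real.log q)^8 / lam z ^ 3 := by
  obtain ⟨C, hC, H⟩ := V_bound
  refine ⟨110 + 16 / 3 * C, by positivity, ?_⟩
  intro q hq z hz
  have hL := lam_ge_one z hz
  have hL16 := lam_pow z hz
  have hl1 := log_ge_one z hz
  have hW : 1 ≤ (1 + Real.log q)^8 := one_le_pow₀ (by linarith [Real.log_natCast_nonneg q])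
  have hV := H q hq z hz
  have hot := omega_triv z hz
  set L := lam z
  set W := (1 + Real.log q)^8
  have hL0 : 0 < L := by linarith
  have hlogK : 3 / 4 * Real.log z ≤ Real.log (z / L^4) := by
    rw [Real.log_div (by linarith) (by positivity)]
    have : Real.log (L^16) ≤ Real.log z := by rw [hL16]; exact Real.log_le_self (by linarith)
    rw [Real.log_pow] at this ⊢
    push_cast at this ⊢
    linarith
  have hK1 : 1 < z / L^4 := by
    by_contra! h
    have := Real.log_nonpos (by positivity) h
    linarith
  set a := ⌊z / L^4⌋₊ with ha
  have ha1 : (a:ℝ) ≤ z / L^4 := Nat.floor_le (by positivity)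
  have ha2 : z / L^4 < (a:ℝ) + 1 := Nat.lt_floor_add_one _
  have haz : z / L^4 ≤ z := div_le_self (by linarith) (one_le_pow₀ hL)
  have ha3 : 1 ≤ a := Nat.le_floor (by simpa using hK1.le)
  have haN : a ≤ ⌊z⌋₊ := Nat.floor_mono haz
  have fr : ∀ m : ℕ, 0 ≤ z / m - ⌊z / m⌋₊ ∧ z / m - ⌊z / m⌋₊ ≤ 1 := by
    intro m
    have := Nat.floor_le (show 0 ≤ z / m by positivity)
    have := Nat.lt_floor_add_one (z / m)
    constructor <;> linarith
  have p1 : |∑ m ∈ Ioc 0 a, cR q m * (z / m - ⌊z / m⌋₊)| ≤ 110 * z / L^3 := by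
    calc _ ≤ ∑ m ∈ Ioc 0 a, |cR q m * (z / m - ⌊z / m⌋₊)| := abs_sum_le_sum_abs _ _
      _ ≤ ∑ m ∈ Ioc 0 a, (1 + (m.primeFactors.card : ℝ)) := by
          refine sum_le_sum fun m _ => ?_
          rw [abs_mul, abs_of_nonneg (fr m).1]
          have := cR_abs q m
          nlinarith [fr m, abs_nonneg (cR q m)]
      _ ≤ 110 * a * L := hot a (by linarith)
      _ ≤ 110 * (z / L^4) * L := by gcongr
      _ = _ := by field_simp
  have hlm : ∀ m : ℕ, a + 1 ≤ m → 0 < Real.log m := by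
    intro m hm
    exact Real.log_pos (by exact_mod_cast (show 1 < m by omega))
  have hmp : ∀ m : ℕ, a + 1 ≤ m → (0:ℝ) < m := by
    intro m hm
    exact_mod_cast (show 0 < m by omega)
  have hM : ∀ t, t ≤ ⌊z⌋₊ → |∑ m ∈ Ioc 0 t, cR q m * Real.log m| ≤ C * z * L^9 * W :=
    fun t ht => hV t ((Nat.le_floor_iff (by linarith)).1 ht)
  have hfirst : z / ((a+1 : ℕ):ℝ) / Real.log ((a+1:ℕ):ℝ) ≤ L^4 / (3/4 * Real.log z) := by
    have e1 : z / ((a+1 : ℕ):ℝ) ≤ L^4 := by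
      rw [div_le_iff₀ (by positivity)]
      rw [div_lt_iff₀ (by positivity)] at ha2
      push_cast; linarith
    have e2 : Real.log (z / L^4) ≤ Real.log ((a+1:ℕ):ℝ) := Real.log_le_log (by linarith) (by push_cast; linarith)
    have : 0 < 3/4 * Real.log z := by linarith
    gcongr
    linarith
  have hdec : ∀ m, a + 1 ≤ m → z / ((m+1:ℕ):ℝ) ≤ z / (m:ℝ) := by
    intro m hm
    have := hmp m hm
    gcongr; simp
  have hlog : ∀ m, a + 1 ≤ m → Real.log (m:ℝ) ≤ Real.log ((m+1:ℕ):ℝ) := by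
    intro m hm
    have := hmp m hm
    gcongr; simp
  have b1 := abel_bound (fun m => cR q m * Real.log m) (fun m => z / m / Real.log m) a _ _ haN hM
    (by
      intro m hm
      have := hlm m hm
      have := hmp m hm
      exact div_le_div₀ (by positivity) (hdec m hm) (hlm m hm) (hlog m hm))
    (by
      intro m hm
      have := hlm m hm
      positivity)
  have b2 := abel_bound (fun m => cR q m * Real.log m) (fun m => ⌊z / m⌋₊ / Real.log m) a _ _ haN hM
    (by
      intro m hm
      exact div_le_div₀ (by positivity) (Nat.cast_le.2 (Nat.floor_mono (hdec m hm))) (hlm m hm) (hlog m hm))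
    (by
      intro m hm
      have := hlm m hm
      positivity)
  have hsec : (⌊z / ((a+1 : ℕ):ℝ)⌋₊:ℝ) / Real.log ((a+1:ℕ):ℝ) ≤ L^4 / (3/4 * Real.log z) := by
    refine le_trans ?_ hfirst
    have := hlm (a+1) le_rfl
    gcongr
    exact Nat.floor_le (by positivity)
  have e : ∑ m ∈ Ioc a ⌊z⌋₊, cR q m * (z / m - ⌊z / m⌋₊)
      = ∑ m ∈ Ioc a ⌊z⌋₊, cR q m * Real.log m * (z / m / Real.log m)
        - ∑ m ∈ Ioc a ⌊z⌋₊, cR q m * Real.log m * (⌊z / m⌋₊ / Real.log m) := by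
    rw [← sum_sub_distrib]
    refine sum_congr rfl fun m hm => ?_
    have h1 := (hlm m (mem_Ioc.1 hm).1).ne'
    rw [mul_assoc, mul_assoc, mul_div_cancel₀ _ h1, mul_div_cancel₀ _ h1]; ring
  have p2 : |∑ m ∈ Ioc a ⌊z⌋₊, cR q m * (z / m - ⌊z / m⌋₊)| ≤ 16/3 * C * z * W / L^3 := by
    rw [e]
    refine (abs_sub _ _).trans ?_
    have hM0 : 0 ≤ 2 * (C * z * L^9 * W) := by positivity
    calc _ ≤ 2 * (C * z * L^9 * W) * (L^4 / (3/4 * Real.log z)) + 2 * (C * z * L^9 * W) * (L^4 / (3/4 * Real.log z)) :=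
          add_le_add (b1.trans (mul_le_mul_of_nonneg_left hfirst hM0)) (b2.trans (mul_le_mul_of_nonneg_left hsec hM0))
      _ = _ := by rw [← hL16]; field_simp; ring
  rw [← sum_Ioc_consecutive _ (Nat.zero_le a) haN]
  refine (abs_add_le _ _).trans ?_
  calc _ ≤ 110 * z / L^3 + 16/3 * C * z * W / L^3 := add_le_add p1 p2
    _ ≤ 110 * z * W / L^3 + 16/3 * C * z * W / L^3 := by
        have : 110 * z ≤ 110 * z * W := le_mul_of_one_le_right (by linarith) hW
        gcongr ?_ / _ + _
    _ = _ := by ring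

/-- the `y`-rough integers up to `N` -/
noncomputable def roughs (y N : ℕ) : Finset ℕ :=
  open Classical in (Ioc 0 N).filter (fun m => ∀ p : ℕ, p.Prime → p ∣ m → y < p)

lemma mem_roughs (y N m : ℕ) : m ∈ roughs y N ↔ (0 < m ∧ m ≤ N) ∧ ∀ p : ℕ, p.Prime → p ∣ m → y < p := by
  unfold roughs; classical rw [mem_filter, mem_Ioc]

lemma rough_coprime (y m k : ℕ) (hm : ∀ p : ℕ, p.Prime → p ∣ m → y < p) (hk0 : 0 < k) (hk : k ≤ y) : Nat.Coprime m k := by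
  refine Nat.Coprime.symm ((Nat.coprime_of_dvd ?_).symm)
  intro p hp h1 h2
  have := hm p hp h1
  have := Nat.le_of_dvd hk0 h2
  omega

lemma harm_lower (y : ℕ) (hy : 1 ≤ y) : Real.log y ≤ ∑ k ∈ Ioc 0 y, (k:ℝ)⁻¹ := by
  have h := log_add_one_le_harmonic y
  rw [harmonic_eq_sum_Icc, Icc_one_eq] at h
  push_cast at h
  refine le_trans (Real.log_le_log (by exact_mod_cast hy) (by linarith)) h

lemma harm_upper (y : ℕ) : ∑ k ∈ Ioc 0 y, (k:ℝ)⁻¹ ≤ 1 + Real.log y := by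
  have h := harmonic_le_one_add_log y
  rw [harmonic_eq_sum_Icc, Icc_one_eq] at h
  push_cast at h
  exact h

lemma rough_inv_sum (y N : ℕ) (hy : 2 ≤ y) (hN : y ≤ N) :
    Real.log y * ∑ m ∈ roughs y N, (m:ℝ)⁻¹ ≤ 1 + 2 * Real.log N := by
  have hy' : (2:ℝ) ≤ y := by exact_mod_cast hy
  have hN' : (y:ℝ) ≤ N := by exact_mod_cast hN
  have h0 : 0 ≤ ∑ m ∈ roughs y N, (m:ℝ)⁻¹ := sum_nonneg fun _ _ => by positivity
  calc _ ≤ (∑ k ∈ Ioc 0 y, (k:ℝ)⁻¹) * ∑ m ∈ roughs y N, (m:ℝ)⁻¹ := by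
        gcongr
        exact harm_lower y (by omega)
    _ = ∑ x ∈ Ioc 0 y ×ˢ roughs y N, ((x.1 * x.2 : ℕ):ℝ)⁻¹ := by
        rw [sum_mul_sum, sum_product]
        refine sum_congr rfl fun k _ => sum_congr rfl fun m _ => ?_
        push_cast; rw [mul_inv]
    _ = ∑ n ∈ (Ioc 0 y ×ˢ roughs y N).image (fun x : ℕ × ℕ => (x.1 * x.2 : ℕ)), (n:ℝ)⁻¹ := by
        rw [sum_image]
        rintro ⟨k, m⟩ h1 ⟨k', m'⟩ h2 h
        simp only [coe_product, Set.mem_prod, mem_coe, mem_roughs, mem_Ioc] at h1 h2 h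
        have c1 := rough_coprime y m k' h1.2.2 h2.1.1 h2.1.2
        have c2 := rough_coprime y m' k h2.2.2 h1.1.1 h1.1.2
        have d1 : m ∣ m' := c1.dvd_of_dvd_mul_left (by rw [← h]; exact dvd_mul_left _ _)
        have d2 : m' ∣ m := c2.dvd_of_dvd_mul_left (by rw [h]; exact dvd_mul_left _ _)
        have e : m = m' := Nat.dvd_antisymm d1 d2
        subst e
        have : k = k' := Nat.eq_of_mul_eq_mul_right h1.2.1.1 h
        rw [this]
    _ ≤ ∑ n ∈ Ioc 0 (y * N), (n:ℝ)⁻¹ := by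
        apply sum_le_sum_of_subset_of_nonneg
        · intro n hn
          rw [mem_image] at hn
          obtain ⟨⟨k, m⟩, h1, rfl⟩ := hn
          simp only [mem_product, mem_roughs, mem_Ioc] at h1 ⊢
          exact ⟨Nat.mul_pos h1.1.1 h1.2.1.1, Nat.mul_le_mul h1.1.2 h1.2.1.2⟩
        · intros; positivity
    _ ≤ 1 + Real.log ((y * N : ℕ):ℝ) := harm_upper _
    _ ≤ _ := by
        push_cast
        rw [Real.log_mul (by positivity) (by linarith)]
        linarith [Real.log_le_log (by linarith) hN']

lemma rough_log_sum (y N : ℕ) :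
    ∑ n ∈ roughs y N, Real.log n ≤ 6 * N * ∑ m ∈ roughs y N, (m:ℝ)⁻¹ := by
  calc _ = ∑ n ∈ roughs y N, ∑ d ∈ n.divisors, vonMangoldt (n / d) := by
        refine sum_congr rfl fun n _ => ?_
        rw [Nat.sum_div_divisors n (fun d => vonMangoldt d), vonMangoldt_sum]
    _ ≤ ∑ n ∈ roughs y N, ∑ m ∈ roughs y N, if m ∣ n then vonMangoldt (n / m) else 0 := by
        refine sum_le_sum fun n hn => ?_
        rw [← sum_filter]
        apply sum_le_sum_of_subset_of_nonneg
        · intro m hm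
          rw [Nat.mem_divisors] at hm
          rw [mem_filter, mem_roughs]
          rw [mem_roughs] at hn
          exact ⟨⟨⟨Nat.pos_of_dvd_of_pos hm.1 hn.1.1, (Nat.le_of_dvd hn.1.1 hm.1).trans hn.1.2⟩,
            fun p hp h => hn.2 p hp (h.trans hm.1)⟩, hm.1⟩
        · intros; exact vonMangoldt_nonneg
    _ = ∑ m ∈ roughs y N, ∑ n ∈ roughs y N with m ∣ n, vonMangoldt (n / m) := by
        rw [sum_comm]
        refine sum_congr rfl fun m _ => ?_
        rw [sum_filter]
    _ ≤ ∑ m ∈ roughs y N, 6 * N * (m:ℝ)⁻¹ := by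
        refine sum_le_sum fun m hm => ?_
        rw [mem_roughs] at hm
        have hm0 := hm.1.1
        calc _ = ∑ d ∈ ((roughs y N).filter (m ∣ ·)).image (· / m), vonMangoldt d := by
              rw [sum_image]
              intro a ha b hb h
              simp only [mem_coe, mem_filter] at ha hb h
              obtain ⟨_, k, rfl⟩ := ha
              obtain ⟨_, l, rfl⟩ := hb
              rw [Nat.mul_div_cancel_left _ hm0, Nat.mul_div_cancel_left _ hm0] at h
              rw [h]
          _ ≤ ∑ d ∈ Ioc 0 ⌊(N:ℝ) / m⌋₊, vonMangoldt d := by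
              apply sum_le_sum_of_subset_of_nonneg
              · intro d hd
                rw [mem_image] at hd
                obtain ⟨n, hn, rfl⟩ := hd
                rw [mem_filter, mem_roughs] at hn
                obtain ⟨hn, k, rfl⟩ := hn
                rw [Nat.mul_div_cancel_left _ hm0, mem_Ioc, Nat.floor_div_eq_div]
                exact ⟨Nat.pos_of_mul_pos_left hn.1.1, (Nat.le_div_iff_mul_le hm0).2 (by rw [mul_comm]; exact hn.1.2)⟩
              · intros; exact vonMangoldt_nonneg
          _ = Chebyshev.psi ((N:ℝ) / m) := rfl
          _ ≤ (Real.log 4 + 4) * (N / m) := Chebyshev.psi_le_const_mul_self (by positivity)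
          _ ≤ 6 * (N / m) := by
              have h4 : Real.log 4 ≤ 1.4 := by
                rw [show (4:ℝ) = 2^2 by norm_num, Real.log_pow]; push_cast; linarith [Real.log_two_lt_d9]
              gcongr; linarith
          _ = _ := by ring
    _ = _ := by rw [mul_sum]

lemma rough_count (y N : ℕ) (hy : 2 ≤ y) : ((roughs y N).card : ℝ) ≤ 1 + 62 * N / Real.log y := by
  have hy' : (2:ℝ) ≤ y := by exact_mod_cast hy
  have hly : 0 < Real.log y := Real.log_pos (by linarith)
  by_cases hN : y ≤ N
  · have hN' : (y:ℝ) ≤ N := by exact_mod_cast hN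
    have hlN : Real.log y ≤ Real.log N := Real.log_le_log (by linarith) hN'
    have hl2 : Real.log 2 ≤ Real.log y := Real.log_le_log (by linarith) hy'
    have hl2' := Real.log_two_gt_d9
    have hs := Real.sqrt_nonneg N
    have hsq := Real.mul_self_sqrt (show (0:ℝ) ≤ N by positivity)
    have hll : Real.log N ≤ 2 * √N := by
      have := Real.log_le_rpow_div (show (0:ℝ) ≤ N by positivity) (ε := 1/2) (by norm_num)
      rw [← Real.sqrt_eq_rpow] at this
      linarith
    -- split
    have h1 : (((roughs y N).filter (fun n => n ≤ ⌊√N⌋₊)).card : ℝ) ≤ √N := by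
      have : ((roughs y N).filter (fun n => n ≤ ⌊√N⌋₊)).card ≤ (Ioc 0 ⌊√(N:ℝ)⌋₊).card := by
        apply card_le_card
        intro n hn
        rw [mem_filter, mem_roughs] at hn
        rw [mem_Ioc]; exact ⟨hn.1.1.1, hn.2⟩
      rw [Nat.card_Ioc, Nat.sub_zero] at this
      calc _ ≤ (⌊√(N:ℝ)⌋₊ : ℝ) := by exact_mod_cast this
        _ ≤ _ := Nat.floor_le hs
    have h2 : (((roughs y N).filter (fun n => ¬ n ≤ ⌊√N⌋₊)).card : ℝ) * (Real.log N / 2) ≤ ∑ n ∈ roughs y N, Real.log n := by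
      calc _ = ∑ n ∈ roughs y N with ¬ n ≤ ⌊√N⌋₊, Real.log N / 2 := by rw [sum_const, nsmul_eq_mul]
        _ ≤ ∑ n ∈ roughs y N with ¬ n ≤ ⌊√N⌋₊, Real.log n := by
            refine sum_le_sum fun n hn => ?_
            rw [mem_filter, not_le] at hn
            rw [← Real.log_sqrt (by positivity)]
            exact Real.log_le_log (Real.sqrt_pos.2 (by linarith)) (Nat.lt_of_floor_lt hn.2).le
        _ ≤ _ := by
            apply sum_le_sum_of_subset_of_nonneg (filter_subset _ _)
            intros; exact Real.log_natCast_nonneg _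
    have h3 := rough_log_sum y N
    have h4 := rough_inv_sum y N hy hN
    have h5 : (((roughs y N).filter (fun n => n ≤ ⌊√N⌋₊)).card : ℝ) + (((roughs y N).filter (fun n => ¬ n ≤ ⌊√N⌋₊)).card : ℝ) = (roughs y N).card := by
      exact_mod_cast card_filter_add_card_filter_not _
    set c1 := (((roughs y N).filter (fun n => n ≤ ⌊√N⌋₊)).card : ℝ)
    set c2 := (((roughs y N).filter (fun n => ¬ n ≤ ⌊√N⌋₊)).card : ℝ)
    set R := ∑ m ∈ roughs y N, (m:ℝ)⁻¹
    have h6 : c2 * Real.log y * Real.log N ≤ 60 * N * Real.log N := by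
      have : c2 * (Real.log N / 2) * Real.log y ≤ 6 * N * (1 + 2 * Real.log N) := by
        calc _ ≤ (6 * N * R) * Real.log y := mul_le_mul_of_nonneg_right (h2.trans h3) hly.le
          _ = 6 * N * (Real.log y * R) := by ring
          _ ≤ _ := by gcongr
      have : 1 ≤ 2 * Real.log N := by linarith
      nlinarith
    have h7 : c2 * Real.log y ≤ 60 * N := le_of_mul_le_mul_right h6 (by linarith)
    have h8 : c1 * Real.log y ≤ 2 * N := by
      calc _ ≤ √N * (2 * √N) := by gcongr; linarith
        _ = 2 * N := by linarith
    have h9 : ((roughs y N).card : ℝ) ≤ 62 * N / Real.log y := by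
      rw [le_div_iff₀ hly, ← h5]; linarith
    linarith
  · have : roughs y N ⊆ {1} := by
      intro n hn
      rw [mem_roughs] at hn
      rw [mem_singleton]
      by_contra h
      have h1 := hn.2 n.minFac (Nat.minFac_prime h) (Nat.minFac_dvd n)
      have h2 := Nat.minFac_le hn.1.1
      omega
    have := card_le_card this
    rw [card_singleton] at this
    have h1 : ((roughs y N).card : ℝ) ≤ 1 := by exact_mod_cast this
    have : 0 ≤ 62 * N / Real.log y := by positivity
    linarith

lemma rough_omega (y N : ℕ) (hy : 2 ≤ y) (hN : 2 ≤ N) :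
    ∑ n ∈ roughs y N, (n.primeFactors.card : ℝ) ≤ 5 * N / Real.log N + 186 * N * Real.log (1 + Real.log N) / Real.log y := by
  have hy' : (2:ℝ) ≤ y := by exact_mod_cast hy
  have hly : 0 < Real.log y := Real.log_pos (by linarith)
  calc _ = ∑ n ∈ roughs y N, ∑ p ∈ Nat.primesLE N, if p ∣ n then (1:ℝ) else 0 := by
        refine sum_congr rfl fun n hn => ?_
        rw [mem_roughs] at hn
        rw [← sum_filter, sum_const, nsmul_eq_mul, mul_one]
        congr 2
        ext p
        rw [Nat.mem_primeFactors, mem_filter, Nat.mem_primesLE]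
        constructor
        · rintro ⟨h1, h2, h3⟩
          exact ⟨⟨(Nat.le_of_dvd (by omega) h2).trans hn.1.2, h1⟩, h2⟩
        · rintro ⟨⟨h1, h2⟩, h3⟩
          exact ⟨h2, h3, by omega⟩
    _ = ∑ p ∈ Nat.primesLE N, (((roughs y N).filter (p ∣ ·)).card : ℝ) := by
        rw [sum_comm]
        refine sum_congr rfl fun p _ => ?_
        rw [← sum_filter, sum_const, nsmul_eq_mul, mul_one]
    _ ≤ ∑ p ∈ Nat.primesLE N, (1 + 62 * N / Real.log y * (p:ℝ)⁻¹) := by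
        refine sum_le_sum fun p hp => ?_
        have hp0 := (eu_primes N p hp).1.pos
        have h1 : ((roughs y N).filter (p ∣ ·)).card ≤ (roughs y (N / p)).card := by
          refine card_le_card_of_injOn (fun m => m / p) ?_ ?_
          · intro m hm
            simp only [mem_coe, mem_filter, mem_roughs] at hm ⊢
            obtain ⟨h1, k, rfl⟩ := hm
            rw [Nat.mul_div_cancel_left k hp0]
            exact ⟨⟨Nat.pos_of_mul_pos_left h1.1.1, (Nat.le_div_iff_mul_le hp0).2 (by rw [mul_comm]; exact h1.1.2)⟩,
              fun r hr h => h1.2 r hr (h.mul_left _)⟩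
          · intro a ha b hb h
            simp only [mem_coe, mem_filter] at ha hb h
            obtain ⟨_, k, rfl⟩ := ha
            obtain ⟨_, l, rfl⟩ := hb
            rw [Nat.mul_div_cancel_left _ hp0, Nat.mul_div_cancel_left _ hp0] at h
            rw [h]
        calc _ ≤ ((roughs y (N / p)).card : ℝ) := by exact_mod_cast h1
          _ ≤ 1 + 62 * ((N / p : ℕ):ℝ) / Real.log y := rough_count y _ hy
          _ ≤ 1 + 62 * (N / p) / Real.log y := by gcongr; exact Nat.cast_div_le
          _ = _ := by ring
    _ = Nat.primeCounting N + 62 * N / Real.log y * ∑ p ∈ Nat.primesLE N, (p:ℝ)⁻¹ := by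
        rw [sum_add_distrib, ← mul_sum, sum_const, nsmul_eq_mul, mul_one]
        congr 2
        simp
    _ ≤ 5 * N / Real.log N + 62 * N / Real.log y * (3 * Real.log (1 + Real.log N)) := by
        have := pi_le5 N (by exact_mod_cast hN)
        rw [Nat.floor_natCast] at this
        gcongr
        exact eu_sum N hN
    _ = _ := by ring

/-- the function `μ(n) ω(n) f(p(n))` -/
noncomputable def gF (f : ℕ → ℝ) (n : ℕ) : ℝ := (moebius n : ℝ) * (n.primeFactors.card : ℝ) * f n.minFac

lemma gF_one (f : ℕ → ℝ) : gF f 1 = 0 := by simp [gF]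

lemma gF_abs (f : ℕ → ℝ) (B : ℝ) (hB : ∀ q : ℕ, q.Prime → |f q| ≤ B) (n : ℕ) :
    |gF f n| ≤ B * n.primeFactors.card := by
  by_cases h : n = 1
  · subst h; simp [gF]
  · have h1 := hB _ (Nat.minFac_prime h)
    have : |(moebius n : ℝ)| ≤ 1 := by exact_mod_cast abs_moebius_le_one
    unfold gF
    rw [abs_mul, abs_mul, Nat.abs_cast]
    calc _ ≤ 1 * (n.primeFactors.card : ℝ) * B := by gcongr
      _ = _ := by ring

lemma not_coprime_primorial (q m : ℕ) (h : ¬ Nat.Coprime m (primorial q)) : ∃ p, p.Prime ∧ p ∣ m ∧ p ≤ q := by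
  obtain ⟨p, hp, h1, h2⟩ := Nat.Prime.not_coprime_iff_dvd.1 h
  refine ⟨p, hp, h1, ?_⟩
  unfold primorial at h2
  obtain ⟨r, hr, h3⟩ := (hp.prime.dvd_finset_prod_iff _).1 h2
  rw [mem_filter, mem_range] at hr
  rw [(Nat.prime_dvd_prime_iff_eq hp hr.2).1 h3]
  omega

lemma coprime_primorial (q m p : ℕ) (h : Nat.Coprime m (primorial q)) (hp : p.Prime) (hm : p ∣ m) : q < p := by
  by_contra! hle
  have : p ∣ primorial q := by
    unfold primorial
    apply dvd_prod_of_mem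
    rw [mem_filter, mem_range]
    exact ⟨by omega, hp⟩
  exact Nat.Prime.not_coprime_iff_dvd.2 ⟨p, hp, hm, this⟩ h

lemma gF_mul (f : ℕ → ℝ) (q m : ℕ) (hq : q.Prime) (hm : 0 < m) :
    (if (q * m).minFac = q then gF f (q * m) else 0) = - f q * cR q m := by
  unfold cR
  split_ifs with h1 h2 h2
  · have hc : Nat.Coprime q m := by
      rw [hq.coprime_iff_not_dvd]
      intro h
      exact lt_irrefl _ (coprime_primorial q m q h2 hq h)
    unfold gF
    rw [h1, isMultiplicative_moebius.map_mul_of_coprime hc, moebius_apply_prime hq, hc.primeFactors_mul,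
      card_union_of_disjoint hc.disjoint_primeFactors, hq.primeFactors, card_singleton]
    push_cast; ring
  · obtain ⟨p, hp, h3, h4⟩ := not_coprime_primorial q m h2
    have h5 := Nat.minFac_le_of_dvd hp.two_le (h3.mul_left q)
    have : p = q := by omega
    subst this
    unfold gF
    rw [moebius_eq_zero_of_not_squarefree]
    · simp
    · intro hs
      have := hs p (Nat.mul_dvd_mul_left p h3)
      exact hp.one_lt.ne' (Nat.isUnit_iff.1 this)
  · exfalso
    apply h1
    have hne : q * m ≠ 1 := by
      intro h
      have := hq.one_lt
      have := Nat.le_mul_of_pos_right q hm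
      omega
    have h3 := Nat.minFac_prime hne
    have h4 := Nat.minFac_dvd (q * m)
    have h5 := Nat.minFac_le_of_dvd hq.two_le (dvd_mul_right q m)
    rcases h3.dvd_mul.1 h4 with h | h
    · exact (Nat.prime_dvd_prime_iff_eq h3 hq).1 h
    · have := coprime_primorial q m _ h2 h3 h
      omega
  · simp

lemma sum_minFac (f : ℕ → ℝ) (F : ℕ → ℝ) (q N : ℕ) (hq : q.Prime) :
    ∑ n ∈ Ioc 0 N, (if n.minFac = q then gF f n * F n else 0) = - f q * ∑ m ∈ Ioc 0 (N / q), cR q m * F (q * m) := by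
  have e : ∀ n, (if n.minFac = q then gF f n * F n else 0) = (if n.minFac = q then gF f n else 0) * F n := by
    intro n; split_ifs <;> simp
  rw [mul_sum]
  have h1 : ∀ m ∈ Ioc 0 (N / q), - f q * (cR q m * F (q * m)) = (if (q*m).minFac = q then gF f (q*m) * F (q*m) else 0) := by
    intro m hm
    rw [e, gF_mul f q m hq (mem_Ioc.1 hm).1]; ring
  rw [sum_congr rfl h1]
  rw [← sum_image (f := fun n => (if n.minFac = q then gF f n * F n else 0)) (g := fun m => q * m) (s := Ioc 0 (N/q))
    (fun a _ b _ h => Nat.eq_of_mul_eq_mul_left hq.pos h)]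
  symm
  apply sum_subset
  · intro n hn
    rw [mem_image] at hn
    obtain ⟨m, hm, rfl⟩ := hn
    rw [mem_Ioc] at hm ⊢
    refine ⟨Nat.mul_pos hq.pos hm.1, ?_⟩
    rw [mul_comm]; exact (Nat.le_div_iff_mul_le hq.pos).1 hm.2
  · intro n hn hn2
    split_ifs with h
    · exfalso
      apply hn2
      rw [mem_image]
      rw [mem_Ioc] at hn
      have hd : q ∣ n := h ▸ Nat.minFac_dvd n
      obtain ⟨k, rfl⟩ := hd
      refine ⟨k, ?_, rfl⟩
      rw [mem_Ioc]
      exact ⟨Nat.pos_of_mul_pos_left hn.1, (Nat.le_div_iff_mul_le hq.pos).2 (by rw [mul_comm]; exact hn.2)⟩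
    · rfl

lemma sum_split (f F : ℕ → ℝ) (y N : ℕ) :
    ∑ n ∈ Ioc 0 N, gF f n * F n = ∑ n ∈ roughs y N, gF f n * F n
      + ∑ q ∈ Nat.primesLE y, ∑ n ∈ Ioc 0 N, (if n.minFac = q then gF f n * F n else 0) := by
  classical
  rw [sum_comm]
  unfold roughs
  rw [sum_filter, ← sum_add_distrib]
  refine sum_congr rfl fun n hn => ?_
  by_cases h1 : n = 1
  · subst h1; simp [gF_one]
  rw [sum_ite_eq]
  have hp := Nat.minFac_prime h1
  by_cases h : n.minFac ≤ y
  · rw [if_neg, if_pos, zero_add]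
    · rw [Nat.mem_primesLE]; exact ⟨h, hp⟩
    · push Not
      exact ⟨_, hp, Nat.minFac_dvd n, h⟩
  · rw [if_pos, if_neg, add_zero]
    · rw [Nat.mem_primesLE]; tauto
    · intro p hpp hd
      have := Nat.minFac_le_of_dvd hpp.two_le hd
      omega

lemma sum_duality (f : ℕ → ℝ) (hf1 : f 1 = 0) (x : ℝ) :
    ∑ d ∈ Ioc 0 ⌊x⌋₊, gF f d * ⌊x / d⌋₊ = ∑ n ∈ Icc 2 ⌊x⌋₊, (f (secondLargestPrimeFac n) - f (maxPrimeFac n)) := by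
  set N := ⌊x⌋₊ with hN
  calc _ = ∑ d ∈ Ioc 0 N, ∑ n ∈ Ioc 0 N, if d ∣ n then gF f d else 0 := by
        refine sum_congr rfl fun d _ => ?_
        rw [← sum_filter, sum_const, Nat.Ioc_filter_dvd_card_eq_div, Nat.floor_div_natCast, nsmul_eq_mul, mul_comm]
    _ = ∑ n ∈ Ioc 0 N, ∑ d ∈ n.divisors, gF f d := by
        rw [sum_comm]
        refine sum_congr rfl fun n hn => ?_
        rw [mem_Ioc] at hn
        rw [← sum_filter]
        congr 1
        ext d
        rw [mem_filter, mem_Ioc, Nat.mem_divisors]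
        constructor
        · rintro ⟨_, h⟩; exact ⟨h, by omega⟩
        · rintro ⟨h, _⟩
          exact ⟨⟨Nat.pos_of_dvd_of_pos h hn.1, (Nat.le_of_dvd hn.1 h).trans hn.2⟩, h⟩
    _ = ∑ n ∈ Icc 2 N, ∑ d ∈ n.divisors, gF f d := by
        symm
        apply sum_subset
        · intro n; rw [mem_Icc, mem_Ioc]; omega
        · intro n h1 h2
          rw [mem_Ioc] at h1; rw [mem_Icc] at h2
          have : n = 1 := by omega
          subst this
          simp [gF_one]
    _ = _ := by
        refine sum_congr rfl fun n hn => ?_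
        exact duality f hf1 n (mem_Icc.1 hn).1

lemma E_bound1 : ∃ C : ℝ, 0 < C ∧ ∀ (f : ℕ → ℝ) (B : ℝ) (_ : 0 ≤ B) (_ : ∀ q : ℕ, q.Prime → |f q| ≤ B)
    (x : ℝ) (_ : 9 ≤ x) (y : ℕ) (_ : 2 ≤ y) (_ : (y:ℝ) ≤ √x),
    |∑ n ∈ Ioc 0 ⌊x⌋₊, gF f n * (x / n - ⌊x / n⌋₊)| ≤
      B * (5 * ⌊x⌋₊ / Real.log ⌊x⌋₊ + 186 * ⌊x⌋₊ * Real.log (1 + Real.log ⌊x⌋₊) / Real.log y)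
      + B * C * x * (1 + Real.log y)^9 / lam (√x)^3 := by
  obtain ⟨C, hC, H⟩ := axer
  refine ⟨3 * C, by positivity, ?_⟩
  intro f B hB0 hB x hx y hy hyx
  have hs3 : 3 ≤ √x := Real.le_sqrt_of_sq_le (by linarith)
  have hy' : (2:ℝ) ≤ y := by exact_mod_cast hy
  have hly : 0 < Real.log y := Real.log_pos (by linarith)
  have hlam := lam_ge_one _ hs3
  have hsx : √x * √x = x := Real.mul_self_sqrt (by linarith)
  rw [sum_split f (fun n => x / n - ⌊x / n⌋₊) y]
  have fr : ∀ m : ℕ, 0 ≤ x / m - ⌊x / m⌋₊ ∧ x / m - ⌊x / m⌋₊ ≤ 1 := by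
    intro m
    have := Nat.floor_le (show 0 ≤ x / m by positivity)
    have := Nat.lt_floor_add_one (x / m)
    constructor <;> linarith
  refine (abs_add_le _ _).trans (add_le_add ?_ ?_)
  · calc _ ≤ ∑ n ∈ roughs y ⌊x⌋₊, |gF f n * (x / n - ⌊x / n⌋₊)| := abs_sum_le_sum_abs _ _
      _ ≤ ∑ n ∈ roughs y ⌊x⌋₊, B * n.primeFactors.card := by
          refine sum_le_sum fun n _ => ?_
          rw [abs_mul, abs_of_nonneg (fr n).1]
          have := gF_abs f B hB n
          nlinarith [fr n, abs_nonneg (gF f n)]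
      _ = B * ∑ n ∈ roughs y ⌊x⌋₊, (n.primeFactors.card : ℝ) := by rw [mul_sum]
      _ ≤ _ := by
          gcongr
          exact rough_omega y _ hy (Nat.le_floor (by push_cast; linarith))
  · calc _ ≤ ∑ q ∈ Nat.primesLE y, |∑ n ∈ Ioc 0 ⌊x⌋₊, (if n.minFac = q then gF f n * (x / n - ⌊x / n⌋₊) else 0)| :=
          abs_sum_le_sum_abs _ _
      _ ≤ ∑ q ∈ Nat.primesLE y, (B * C * x * (1 + Real.log y)^8 / lam (√x)^3) * (q:ℝ)⁻¹ := by
          refine sum_le_sum fun q hq => ?_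
          obtain ⟨hqp, hqy⟩ := eu_primes y q hq
          rw [sum_minFac f (fun n => x / n - ⌊x / n⌋₊) q _ hqp, abs_mul, abs_neg]
          have hq2 : (2:ℝ) ≤ q := by exact_mod_cast hqp.two_le
          have hz : √x ≤ x / q := by
            rw [le_div_iff₀ (by linarith)]
            nlinarith
          have h1 := H q hqp.two_le (x / q) (by linarith)
          rw [Nat.floor_div_natCast] at h1
          have e : ∀ m : ℕ, x / q / m = x / ((q * m : ℕ):ℝ) := by
            intro m; push_cast; rw [div_div]
          simp only [e] at h1
          have h2 := lam_mono _ _ hs3 hz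
          have h3 := hB q hqp
          have hlq := Real.log_natCast_nonneg q
          calc _ ≤ B * (C * (x / q) * (1 + Real.log q)^8 / lam (x / q)^3) := by gcongr
            _ ≤ B * (C * (x / q) * (1 + Real.log y)^8 / lam (√x)^3) := by gcongr
            _ = _ := by ring
      _ = (B * C * x * (1 + Real.log y)^8 / lam (√x)^3) * ∑ q ∈ Nat.primesLE y, (q:ℝ)⁻¹ := by rw [mul_sum]
      _ ≤ (B * C * x * (1 + Real.log y)^8 / lam (√x)^3) * (3 * (1 + Real.log y)) := by
          gcongr
          refine (eu_sum y hy).trans ?_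
          have := Real.log_le_sub_one_of_pos (show 0 < 1 + Real.log y by linarith)
          linarith
      _ = _ := by ring

lemma E_bound2 (f : ℕ → ℝ) (B : ℝ) (hB0 : 0 ≤ B) (hB : ∀ q : ℕ, q.Prime → |f q| ≤ B) :
    ∃ D : ℝ, ∀ x : ℝ, Real.exp (2^128) ≤ x →
      |∑ n ∈ Ioc 0 ⌊x⌋₊, gF f n * (x / n - ⌊x / n⌋₊)| ≤ D / (Real.log x)^(1/128:ℝ) * x := by
  obtain ⟨C, hC, H⟩ := E_bound1
  refine ⟨B * (10 + 186 * 129) + B * C * 512, ?_⟩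
  intro x hx
  have hx0 : 0 < x := (Real.exp_pos _).trans_le hx
  have hu : (2:ℝ)^128 ≤ Real.log x := (Real.le_log_iff_exp_le hx0).2 hx
  set u := Real.log x with hudef
  have hu0 : 0 < u := lt_of_lt_of_le (by positivity) hu
  set s := u^(1/128:ℝ) with hs
  have hsu : s^128 = u := by
    rw [hs, ← Real.rpow_natCast, ← Real.rpow_mul hu0.le]; norm_num
  have hs0 : 0 < s := Real.rpow_pos_of_pos hu0 _
  have hs2 : 2 ≤ s := by
    apply le_of_pow_le_pow_left₀ (n := 128) (by norm_num) hs0.le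
    rw [hsu]; exact hu
  have hx9 : 9 ≤ x := by
    have : (2:ℝ)^128 + 1 ≤ x := (Real.add_one_le_exp _).trans hx
    norm_num at this; linarith
  set y := ⌈Real.exp (s^2)⌉₊ with hy
  have hy1 : Real.exp (s^2) ≤ y := Nat.le_ceil _
  have hy2 : (y:ℝ) ≤ Real.exp (s^2 + 1) := by
    have h1 := Nat.ceil_lt_add_one (Real.exp_pos (s^2)).le
    have h2 : 1 ≤ Real.exp (s^2) := Real.one_le_exp (by positivity)
    rw [Real.exp_add]
    nlinarith [Real.exp_one_gt_d9]
  have hy5 : (5:ℝ) ≤ y := by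
    have := Real.add_one_le_exp (s^2)
    nlinarith
  have hy2' : 2 ≤ y := by
    have : (2:ℝ) ≤ y := by linarith
    exact_mod_cast this
  have hly1 : s^2 ≤ Real.log y := (Real.le_log_iff_exp_le (by linarith)).2 hy1
  have hly2 : Real.log y ≤ s^2 + 1 := (Real.log_le_iff_le_exp (by linarith)).2 hy2
  have hsq : √x = Real.exp (u / 2) := by
    rw [hudef, ← Real.log_sqrt hx0.le, Real.exp_log (Real.sqrt_pos.2 hx0)]
  have hs4 : (4:ℝ) ≤ s^2 := by nlinarith
  have hs124 : s^2 + 1 ≤ u / 2 := by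
    have : s^4 ≤ s^128 := pow_le_pow_right₀ (by linarith) (by norm_num)
    rw [hsu] at this
    nlinarith
  have hyx : (y:ℝ) ≤ √x := by
    rw [hsq]; exact hy2.trans (Real.exp_le_exp.2 hs124)
  have hmain := H f B hB0 hB x hx9 y hy2' hyx
  have hs3 : 3 ≤ √x := Real.le_sqrt_of_sq_le (by linarith)
  have hsx : √x * √x = x := Real.mul_self_sqrt (by linarith)
  have hN1 : (⌊x⌋₊:ℝ) ≤ x := Nat.floor_le hx0.le
  have hN2 : √x ≤ ⌊x⌋₊ := by
    have := Nat.lt_floor_add_one x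
    nlinarith
  have hlN1 : u / 2 ≤ Real.log ⌊x⌋₊ := by
    rw [hudef, ← Real.log_sqrt hx0.le]
    exact Real.log_le_log (by linarith) hN2
  have hlN2 : Real.log ⌊x⌋₊ ≤ u := Real.log_le_log (by linarith) hN1
  have hsleu : s ≤ u := by
    rw [← hsu]; exact le_self_pow₀ (by linarith) (by norm_num)
  have hlog1u : Real.log (1 + Real.log ⌊x⌋₊) ≤ 129 * s := by
    have h1 : Real.log (1 + Real.log ⌊x⌋₊) ≤ Real.log (2 * s^128) := by
      rw [hsu]
      refine Real.log_le_log (by linarith) ?_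
      linarith
    rw [Real.log_mul (by norm_num) (by positivity), Real.log_pow] at h1
    have h2 := Real.log_le_self hs0.le
    have h3 := Real.log_two_lt_d9
    push_cast at h1
    linarith
  have hlNpos : 0 ≤ Real.log (1 + Real.log ⌊x⌋₊) := Real.log_nonneg (by linarith)
  have hlam : s^7 ≤ lam (√x) := by
    have h1 := lam_pow _ hs3
    have h2 := lam_ge_one _ hs3
    apply le_of_pow_le_pow_left₀ (n := 16) (by norm_num) (by linarith)
    rw [h1, Real.log_sqrt hx0.le, ← hudef, ← hsu]
    have h3 : (2:ℝ)^16 ≤ s^16 := by gcongr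
    have h4 : s^128 = (s^7)^16 * s^16 := by ring
    rw [h4, le_div_iff₀ (by norm_num)]
    gcongr
    norm_num at h3; linarith
  have t1 : 5 * (⌊x⌋₊:ℝ) / Real.log ⌊x⌋₊ ≤ 10 / s * x := by
    calc _ ≤ 5 * x / (s / 2) := by gcongr; linarith
      _ = _ := by field_simp; norm_num
  have t2 : 186 * (⌊x⌋₊:ℝ) * Real.log (1 + Real.log ⌊x⌋₊) / Real.log y ≤ 186 * 129 / s * x := by
    calc _ ≤ 186 * x * (129 * s) / s^2 := by gcongr
      _ = _ := by field_simp
  have t3 : B * C * x * (1 + Real.log y)^9 / lam (√x)^3 ≤ B * C * 512 / s * x := by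
    calc _ ≤ B * C * x * (2 * s^2)^9 / (s^7)^3 := by
          have : 0 < Real.log y := by linarith
          gcongr
          linarith
      _ = B * C * 512 * x / s^3 := by field_simp; ring
      _ ≤ B * C * 512 * x / s := by
          gcongr
          exact le_self_pow₀ (by linarith) (by norm_num)
      _ = _ := by ring
  calc _ ≤ _ := hmain
    _ ≤ B * (10 / s * x + 186 * 129 / s * x) + B * C * 512 / s * x := by gcongr
    _ = _ := by ring

/-- If `f` is a real-valued function with `f(1) = 0`, bounded on the primes, and there is
a constant `κ` with `Σ_{2 ≤ n ≤ x} f(P(n)) = κx + o(x)` and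
`Σ_{2 ≤ n ≤ x} f(P₂(n)) = κx + o(x)`, then `Σ_{n ≥ 2} μ(n) ω(n) f(p(n))/n` converges to
`0`, i.e. its partial sums tend to `0` as `x → ∞`. -/
theorem moebius_omega_f_smallest_factor_div
    (f : ℕ → ℝ) (hf1 : f 1 = 0) (B : ℝ) (hB : ∀ q : ℕ, q.Prime → |f q| ≤ B) (κ : ℝ)
    (hP : (fun x : ℝ => (∑ n ∈ Finset.Icc 2 ⌊x⌋₊, f (maxPrimeFac n)) - κ * x)
        =o[atTop] (fun x : ℝ => x))
    (hP2 : (fun x : ℝ => (∑ n ∈ Finset.Icc 2 ⌊x⌋₊, f (secondLargestPrimeFac n)) - κ * x)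
        =o[atTop] (fun x : ℝ => x)) :
    Tendsto (fun x : ℝ =>
        ∑ n ∈ Finset.Icc 2 ⌊x⌋₊,
          (moebius n : ℝ) * (n.primeFactors.card : ℝ) * f n.minFac / n)
      atTop (nhds 0) := by
  have hB0 : 0 ≤ B := (abs_nonneg _).trans (hB 2 Nat.prime_two)
  obtain ⟨D, hD⟩ := E_bound2 f B hB0 hB
  have h1 := (hP2.sub hP).tendsto_div_nhds_zero
  have h2 : Tendsto (fun x : ℝ => D / (Real.log x)^(1/128:ℝ)) atTop (nhds 0) :=
    ((tendsto_rpow_atTop (by norm_num)).comp Real.tendsto_log_atTop).const_div_atTop D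
  have h3 : Tendsto (fun x : ℝ => (∑ n ∈ Ioc 0 ⌊x⌋₊, gF f n * (x / n - ⌊x / n⌋₊)) / x) atTop (nhds 0) := by
    refine squeeze_zero_norm' ?_ h2
    filter_upwards [eventually_ge_atTop (Real.exp (2^128))] with x hx
    have hx0 : 0 < x := (Real.exp_pos _).trans_le hx
    rw [Real.norm_eq_abs, abs_div, abs_of_pos hx0, div_le_iff₀ hx0]
    exact hD x hx
  have h4 := h1.add h3
  rw [add_zero] at h4
  refine h4.congr' ?_
  filter_upwards [eventually_gt_atTop 0] with x hx0
  have hd := sum_duality f hf1 x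
  have e1 : ∑ n ∈ Icc 2 ⌊x⌋₊, (moebius n : ℝ) * (n.primeFactors.card : ℝ) * f n.minFac / n
      = ∑ n ∈ Ioc 0 ⌊x⌋₊, gF f n / n := by
    apply sum_subset
    · intro n; rw [mem_Icc, mem_Ioc]; omega
    · intro n h1 h2
      rw [mem_Ioc] at h1; rw [mem_Icc] at h2
      have : n = 1 := by omega
      subst this
      simp
  rw [e1, ← add_div, div_eq_iff hx0.ne', sum_mul]
  have e2 : ∑ n ∈ Ioc 0 ⌊x⌋₊, gF f n / n * x = ∑ n ∈ Ioc 0 ⌊x⌋₊, gF f n * ⌊x / n⌋₊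
      + ∑ n ∈ Ioc 0 ⌊x⌋₊, gF f n * (x / n - ⌊x / n⌋₊) := by
    rw [← sum_add_distrib]
    refine sum_congr rfl fun n _ => ?_
    ring
  rw [e2, hd, sum_sub_distrib]
  ring
end

section
/- There exists a constant C > 0 such that for all real x ≥ 4, |Σ_{√x < p ≤ x} ⌊x/p⌋ − x·log 2| ≤ C · x / log x, where the sum runs over primes p with √x < p ≤ x and ⌊y⌋ denotes the integer part of y. -/
open Finset Real

noncomputable def cc (k : ℕ) : ℝ := if k.Prime then Real.log k / k else 0

noncomputable def AA (n : ℕ) : ℝ := ∑ k ∈ Finset.Icc 0 n, cc k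

theorem log_fact (n : ℕ) : Real.log (n.factorial : ℝ) =
    ∑ p ∈ (Finset.Icc 0 n).filter Nat.Prime, (n.factorial.factorization p : ℝ) * Real.log p := by
  rw [Real.log_nat_eq_sum_factorization]
  apply Finsupp.sum_of_support_subset
  · intro p hp
    have h := Nat.prime_of_mem_primeFactors (by simpa using hp : p ∈ n.factorial.primeFactors)
    have h2 := Nat.dvd_of_mem_primeFactors (by simpa using hp : p ∈ n.factorial.primeFactors)
    simp [h, (h.dvd_factorial).1 h2]
  · simp

theorem AA_eq (n : ℕ) : AA n = ∑ p ∈ (Finset.Icc 0 n).filter Nat.Prime, Real.log p / p := by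
  rw [AA, Finset.sum_filter]; rfl

theorem div_le_fact {n p : ℕ} (hp : p.Prime) : n / p ≤ n.factorial.factorization p := by
  rw [Nat.factorization_factorial hp (b := Nat.log p n + 2) (by omega)]
  have := Finset.single_le_sum (f := fun i => n / p ^ i) (s := Finset.Ico 1 (Nat.log p n + 2))
    (fun _ _ => Nat.zero_le _) (a := 1) (by simp)
  simpa using this

theorem AA_le {n : ℕ} (hn : 1 ≤ n) : AA n ≤ Real.log n + Real.log 4 := by
  have hn0 : (0:ℝ) < n := by exact_mod_cast hn
  have h1 : n * AA n - Chebyshev.theta n ≤ Real.log (n.factorial : ℝ) := by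
    rw [AA_eq, Chebyshev.theta_eq_sum_Icc, Nat.floor_natCast, log_fact, Finset.mul_sum,
      ← Finset.sum_sub_distrib]
    apply Finset.sum_le_sum
    intro p hp
    have hp' := (Finset.mem_filter.1 hp).2
    have hl : 0 ≤ Real.log p := Real.log_natCast_nonneg p
    have h2 : (n:ℝ) / p ≤ (n.factorial.factorization p : ℝ) + 1 := by
      have : ((n / p : ℕ):ℝ) ≤ n.factorial.factorization p := by exact_mod_cast div_le_fact hp'
      have h3 := Nat.lt_floor_add_one ((n:ℝ)/p)
      rw [Nat.floor_div_eq_div] at h3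
      linarith
    have := mul_le_mul_of_nonneg_right h2 hl
    calc _ = (n:ℝ) / p * Real.log p - Real.log p := by ring
      _ ≤ _ := by linarith
  have h2 := Chebyshev.theta_le_log4_mul_x hn0.le
  have h3 : Real.log (n.factorial : ℝ) ≤ n * Real.log n := by
    rw [← Real.log_pow]
    apply Real.log_le_log (by positivity)
    exact_mod_cast Nat.factorial_le_pow n
  have : n * AA n ≤ n * (Real.log n + Real.log 4) := by linarith
  exact le_of_mul_le_mul_left this hn0

theorem le_AA : ∃ K : ℝ, 0 ≤ K ∧ ∀ n : ℕ, 1 ≤ n → Real.log n - K ≤ AA n := by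
  have hs : Summable (fun n : ℕ => 4 * (n:ℝ) ^ (-(3/2) : ℝ)) :=
    (Real.summable_nat_rpow.mpr (by norm_num)).mul_left 4
  refine ⟨1 + ∑' n : ℕ, 4 * (n:ℝ) ^ (-(3/2) : ℝ), by positivity, fun n hn => ?_⟩
  have hn0 : (0:ℝ) < n := by exact_mod_cast hn
  have h1 : Real.log (n.factorial : ℝ) ≤ n * (AA n + ∑ p ∈ (Finset.Icc 0 n).filter Nat.Prime,
      4 * (p:ℝ) ^ (-(3/2) : ℝ)) := by
    rw [AA_eq, log_fact, ← Finset.sum_add_distrib, Finset.mul_sum]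
    apply Finset.sum_le_sum
    intro p hp
    have hp' := (Finset.mem_filter.1 hp).2
    have hp2 : (2:ℝ) ≤ p := by exact_mod_cast hp'.two_le
    have hp0 : (0:ℝ) < p := by linarith
    have hl : 0 ≤ Real.log p := Real.log_natCast_nonneg p
    have h2 : (n.factorial.factorization p : ℝ) ≤ n / (p - 1) := by
      have h := Nat.factorization_factorial_le_div_pred hp' n
      have h3 : (n.factorial.factorization p : ℝ) ≤ ((n / (p-1) : ℕ) : ℝ) := by exact_mod_cast h
      refine h3.trans (Nat.cast_div_le.trans ?_)
      rw [Nat.cast_sub hp'.one_le]; simp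
    have h4 : Real.log p ≤ 2 * (p:ℝ) ^ (1/2 : ℝ) := by
      have := Real.log_le_rpow_div hp0.le (ε := 1/2) (by norm_num)
      linarith
    have h5 : (p:ℝ) ^ (-(3/2) : ℝ) = (p:ℝ) ^ (1/2 : ℝ) / p ^ 2 := by
      rw [← Real.rpow_natCast, ← Real.rpow_sub hp0]; norm_num
    have h6 : Real.log p / (p - 1) ≤ Real.log p / p + 4 * (p:ℝ) ^ (-(3/2) : ℝ) := by
      have : Real.log p / (p - 1) - Real.log p / p = Real.log p * (1 / (p * (p-1))) := by
        have : (p:ℝ) - 1 ≠ 0 := by linarith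
        field_simp; ring
      have h7 : 1 / ((p:ℝ) * (p-1)) ≤ 2 / p^2 := by
        rw [div_le_div_iff₀ (by nlinarith) (by positivity)]; nlinarith
      have h8 := mul_le_mul h4 h7 (by apply one_div_nonneg.2; nlinarith) (by positivity)
      rw [h5]
      have h9 : 2 * (p:ℝ) ^ (1/2 : ℝ) * (2 / p^2) = 4 * ((p:ℝ) ^ (1/2 : ℝ) / p ^ 2) := by ring
      linarith
    calc _ ≤ n / ((p:ℝ) - 1) * Real.log p := mul_le_mul_of_nonneg_right h2 hl
      _ = n * (Real.log p / (p - 1)) := by ring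
      _ ≤ _ := mul_le_mul_of_nonneg_left h6 hn0.le
  have h2 : n * (Real.log n - 1) ≤ Real.log (n.factorial : ℝ) := by
    have := Stirling.le_log_factorial_stirling (n := n) (by omega)
    have h3 : 0 ≤ Real.log (2 * π * n) := by
      apply Real.log_nonneg
      have : (1:ℝ) ≤ n := by exact_mod_cast hn
      nlinarith [Real.pi_gt_three]
    have h4 := Real.log_natCast_nonneg n
    have h5 : 0 ≤ Real.log (2 * π) := Real.log_nonneg (by nlinarith [Real.pi_gt_three])
    linarith
  have h3 := hs.sum_le_tsum ((Finset.Icc 0 n).filter Nat.Prime) (fun _ _ => by positivity)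
  have h4 := le_of_mul_le_mul_left (h2.trans h1) hn0
  linarith

theorem mertens : ∃ K : ℝ, 0 ≤ K ∧ ∀ t : ℝ, 1 ≤ t → |AA ⌊t⌋₊ - Real.log t| ≤ K := by
  obtain ⟨K, hK, h⟩ := le_AA
  have h4 : 0 ≤ Real.log 4 := Real.log_nonneg (by norm_num)
  have h2 : 0 ≤ Real.log 2 := Real.log_nonneg (by norm_num)
  refine ⟨K + Real.log 2 + Real.log 4, by positivity, fun t ht => ?_⟩
  have hf : 1 ≤ ⌊t⌋₊ := (Nat.one_le_floor_iff _).2 ht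
  have hf' : (1:ℝ) ≤ ⌊t⌋₊ := by exact_mod_cast hf
  have a1 : Real.log ⌊t⌋₊ ≤ Real.log t :=
    Real.log_le_log (by linarith) (Nat.floor_le (by linarith))
  have a2 : Real.log t ≤ Real.log 2 + Real.log ⌊t⌋₊ := by
    rw [← Real.log_mul (by norm_num) (by linarith)]
    apply Real.log_le_log (by linarith)
    linarith [Nat.lt_floor_add_one t]
  have := h _ hf
  have := AA_le hf
  rw [abs_le]; constructor <;> linarith

theorem deriv_f (t : ℝ) : deriv (fun x => (Real.log x)⁻¹) t = - (t * Real.log t ^ 2)⁻¹ := by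
  simp [field]

theorem int_K (K : ℝ) {a b : ℝ} (ha : 1 < a) (hab : a ≤ b) :
    IntervalIntegrable (fun t => (t * Real.log t ^ 2)⁻¹ * (Real.log t + K)) MeasureTheory.volume a b ∧
    ∫ t in a..b, (t * Real.log t ^ 2)⁻¹ * (Real.log t + K) =
      (Real.log (Real.log b) - K * (Real.log b)⁻¹) - (Real.log (Real.log a) - K * (Real.log a)⁻¹) := by
  have hi : IntervalIntegrable (fun t => (t * Real.log t ^ 2)⁻¹ * (Real.log t + K)) MeasureTheory.volume a b := by
    apply ContinuousOn.intervalIntegrable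
    rw [Set.uIcc_of_le hab]
    intro t ht
    have h0 : t ≠ 0 := by linarith [ht.1]
    have hl : 0 < Real.log t := Real.log_pos (by linarith [ht.1])
    have h1 : t * Real.log t ^ 2 ≠ 0 := by positivity
    apply ContinuousAt.continuousWithinAt
    fun_prop (disch := assumption)
  refine ⟨hi, ?_⟩
  apply intervalIntegral.integral_eq_sub_of_hasDerivAt (f := fun t => Real.log (Real.log t) - K * (Real.log t)⁻¹) _ hi
  intro t ht
  rw [Set.uIcc_of_le hab] at ht
  have h0 : t ≠ 0 := by linarith [ht.1]
  have hl : 0 < Real.log t := Real.log_pos (by linarith [ht.1])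
  have d1 := Real.hasDerivAt_log h0
  convert! (d1.log hl.ne').sub ((d1.inv hl.ne').const_mul K) using 1
  field_simp
  ring

theorem sum_recip : ∃ K : ℝ, 0 ≤ K ∧ ∀ x : ℝ, 4 ≤ x →
    |∑ k ∈ Finset.Ioc ⌊√x⌋₊ ⌊x⌋₊, (Real.log k)⁻¹ * cc k - Real.log 2| ≤ K / Real.log x := by
  obtain ⟨K, hK, hM⟩ := mertens
  refine ⟨6 * K, by positivity, fun x hx => ?_⟩
  have ha : 2 ≤ √x := Real.le_sqrt_of_sq_le (by norm_num [hx])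
  have hab : √x ≤ x := (Real.sqrt_le_left (by linarith)).mpr (by nlinarith)
  have hL : 0 < Real.log x := Real.log_pos (by linarith)
  have hla : Real.log √x = Real.log x / 2 := Real.log_sqrt (by linarith)
  have hci : MeasureTheory.IntegrableOn (fun t : ℝ => (t * Real.log t ^ 2)⁻¹) (Set.Icc √x x) := by
    refine ContinuousOn.integrableOn_Icc fun t ht => ContinuousAt.continuousWithinAt ?_
    have h0 : t ≠ 0 := by linarith [ht.1]
    have hl : 0 < Real.log t := Real.log_pos (by linarith [ht.1])
    have h1 : t * Real.log t ^ 2 ≠ 0 := by positivity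
    fun_prop (disch := assumption)
  have key := sum_mul_eq_sub_sub_integral_mul cc (f := fun t => (Real.log t)⁻¹) (a := √x) (b := x)
    (by linarith) hab
    (by
      intro t ht
      have h0 : t ≠ 0 := by linarith [ht.1]
      have hl : 0 < Real.log t := Real.log_pos (by linarith [ht.1])
      have h1 := hl.ne'
      fun_prop (disch := assumption))
    (by
      rw [show deriv (fun t => (Real.log t)⁻¹) = fun t => - (t * Real.log t ^ 2)⁻¹ from funext deriv_f]
      exact hci.neg)
  rw [key]
  simp only [deriv_f, neg_mul]
  rw [MeasureTheory.integral_neg, ← intervalIntegral.integral_of_le hab]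
  change |(Real.log x)⁻¹ * AA ⌊x⌋₊ - (Real.log √x)⁻¹ * AA ⌊√x⌋₊ -
    -(∫ t in √x..x, (t * Real.log t ^ 2)⁻¹ * AA ⌊t⌋₊) - Real.log 2| ≤ _
  have hI : IntervalIntegrable (fun t => (t * Real.log t ^ 2)⁻¹ * AA ⌊t⌋₊)
      MeasureTheory.volume √x x := by
    rw [intervalIntegrable_iff_integrableOn_Icc_of_le hab]
    exact integrableOn_mul_sum_Icc cc (by linarith) hci
  obtain ⟨i1, e1⟩ := int_K K (a := √x) (b := x) (by linarith) hab
  obtain ⟨i2, e2⟩ := int_K (-K) (a := √x) (b := x) (by linarith) hab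
  have hpos : ∀ t ∈ Set.Icc √x x, 0 ≤ (t * Real.log t ^ 2)⁻¹ := by
    intro t ht
    have : 0 ≤ t := by linarith [ht.1]
    positivity
  have u := intervalIntegral.integral_mono_on hab hI i1 (fun t ht =>
    mul_le_mul_of_nonneg_left (by linarith [(abs_le.1 (hM t (by linarith [ht.1]))).2]) (hpos t ht))
  have l := intervalIntegral.integral_mono_on hab i2 hI (fun t ht =>
    mul_le_mul_of_nonneg_left (by linarith [(abs_le.1 (hM t (by linarith [ht.1]))).1]) (hpos t ht))
  rw [e1] at u
  rw [e2] at l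
  have hll : Real.log (Real.log √x) = Real.log (Real.log x) - Real.log 2 := by
    rw [hla, Real.log_div hL.ne' (by norm_num)]
  have hinv : (Real.log √x)⁻¹ = 2 * (Real.log x)⁻¹ := by rw [hla]; field_simp
  rw [hll, hinv] at u l
  rw [hinv]
  have mx := abs_le.1 (hM x (by linarith))
  have ms := abs_le.1 (hM √x (by linarith))
  rw [hla] at ms
  set v := (Real.log x)⁻¹ with hv
  have hv0 : 0 < v := inv_pos.2 hL
  have hvl : v * Real.log x = 1 := inv_mul_cancel₀ hL.ne'
  have b1 := mul_le_mul_of_nonneg_left mx.1 hv0.le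
  have b2 := mul_le_mul_of_nonneg_left mx.2 hv0.le
  have b3 := mul_le_mul_of_nonneg_left ms.1 hv0.le
  have b4 := mul_le_mul_of_nonneg_left ms.2 hv0.le
  have hKv : 0 ≤ K * v := by positivity
  rw [div_eq_mul_inv, ← hv, abs_le]
  constructor <;> nlinarith

theorem sum_floor_over_large_primes :
    ∃ C > (0 : ℝ), ∀ x : ℝ, 4 ≤ x →
      |(∑ p ∈ (Finset.Icc 1 ⌊x⌋₊).filter (fun p : ℕ => Nat.Prime p ∧ Real.sqrt x < (p : ℝ)),
          (⌊x / (p : ℝ)⌋ : ℝ)) - x * Real.log 2|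
        ≤ C * x / Real.log x := by
  obtain ⟨K, hK, hS⟩ := sum_recip
  have h4 : 0 < Real.log 4 := Real.log_pos (by norm_num)
  refine ⟨K + 2 * Real.log 4, by positivity, fun x hx => ?_⟩
  have hL : 0 < Real.log x := Real.log_pos (by linarith)
  have hla : Real.log √x = Real.log x / 2 := Real.log_sqrt (by linarith)
  have ha : 2 ≤ √x := Real.le_sqrt_of_sq_le (by norm_num [hx])
  set S := (Finset.Icc 1 ⌊x⌋₊).filter (fun p : ℕ => Nat.Prime p ∧ Real.sqrt x < (p : ℝ)) with hSdef
  have e1 : ∑ k ∈ Finset.Ioc ⌊√x⌋₊ ⌊x⌋₊, (Real.log k)⁻¹ * cc k = ∑ p ∈ S, 1 / (p:ℝ) := by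
    have : S = (Finset.Ioc ⌊√x⌋₊ ⌊x⌋₊).filter Nat.Prime := by
      ext p
      simp only [hSdef, Finset.mem_filter, Finset.mem_Icc, Finset.mem_Ioc]
      rw [Nat.floor_lt (by positivity)]
      constructor
      · rintro ⟨⟨_, b⟩, c, d⟩; exact ⟨⟨d, b⟩, c⟩
      · rintro ⟨⟨d, b⟩, c⟩; exact ⟨⟨c.one_le, b⟩, c, d⟩
    rw [this, Finset.sum_filter]
    refine Finset.sum_congr rfl fun k _ => ?_
    unfold cc
    split_ifs with h
    · have h1 : 0 < Real.log k := Real.log_pos (by exact_mod_cast h.one_lt)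
      field_simp
    · simp
  have hm := hS x hx
  rw [e1] at hm
  have hcard : (S.card : ℝ) ≤ 2 * Real.log 4 * x / Real.log x := by
    have t1 : (S.card : ℝ) * Real.log √x ≤ Chebyshev.theta x := by
      rw [Chebyshev.theta_eq_sum_Icc, ← nsmul_eq_mul, ← Finset.sum_const]
      refine (Finset.sum_le_sum (g := fun p : ℕ => Real.log p) ?_).trans
        (Finset.sum_le_sum_of_subset_of_nonneg ?_ ?_)
      · intro p hp
        exact Real.log_le_log (by linarith) (Finset.mem_filter.1 hp).2.2.le
      · intro p hp
        simp only [hSdef, Finset.mem_filter, Finset.mem_Icc] at hp ⊢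
        exact ⟨⟨by omega, hp.1.2⟩, hp.2.1⟩
      · intro p _ _; exact Real.log_natCast_nonneg p
    have t2 := Chebyshev.theta_le_log4_mul_x (x := x) (by linarith)
    rw [hla] at t1
    rw [le_div_iff₀ hL]
    linarith
  have up : ∑ p ∈ S, (⌊x / (p : ℝ)⌋ : ℝ) ≤ x * ∑ p ∈ S, 1 / (p:ℝ) := by
    rw [Finset.mul_sum]
    refine Finset.sum_le_sum fun p _ => ?_
    rw [mul_one_div]; exact Int.floor_le _
  have lo : x * ∑ p ∈ S, 1 / (p:ℝ) ≤ ∑ p ∈ S, (⌊x / (p : ℝ)⌋ : ℝ) + S.card := by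
    rw [Finset.mul_sum, Finset.card_eq_sum_ones, Nat.cast_sum, ← Finset.sum_add_distrib]
    refine Finset.sum_le_sum fun p _ => ?_
    rw [mul_one_div]; push_cast; exact (Int.lt_floor_add_one _).le
  have hm' := abs_le.1 hm
  have m1 := mul_le_mul_of_nonneg_left hm'.1 (by linarith : 0 ≤ x)
  have m2 := mul_le_mul_of_nonneg_left hm'.2 (by linarith : 0 ≤ x)
  have e2 : (K + 2 * Real.log 4) * x / Real.log x = x * (K / Real.log x) + 2 * Real.log 4 * x / Real.log x := by ring
  have e3 : 0 ≤ 2 * Real.log 4 * x / Real.log x := by positivity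
  rw [e2, abs_le]
  constructor <;> linarith
end
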